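/- arXiv:1310.6711 — 2 statements merged into one kernel-verified Lean document; each statement's English description precedes it below -/
import Mathlib

section
/- Let n ≥ 2 and let Ω = ℝⁿ \ Ḡ, where G is a convex domain in ℝⁿ. If u = (u_1, …, u_n) is an n-component vector field with bounded harmonic components in Ω, then for every point x ∈ Ω, |div u(x)| ≤ (D_n / d_x) · sup_Ω |u|, where D_n = (2 ω_{n−1} / ω_n) ∫₀^{π/2} [1 + n(n−2) cos²θ]^{1/2} sin^{n−2}θ dθ. -/
open MeasureTheory Real Filter Metric
open scoped Real RealInnerProductSpace

noncomputable section

/-- `Eu n` is the Euclidean space `ℝⁿ`. -/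
abbrev Eu (n : ℕ) := EuclideanSpace ℝ (Fin n)

/-- `ω_n`: the surface area of the unit sphere `S^{n-1}` in `ℝⁿ`,
given by the classical formula `2 π^{n/2} / Γ(n/2)`. -/
def sphereArea (n : ℕ) : ℝ := 2 * π ^ ((n : ℝ) / 2) / Real.Gamma ((n : ℝ) / 2)

/-- A function is harmonic on a set: it is twice continuously differentiable
there and its Laplacian (the sum of the pure second partial derivatives in the
coordinate directions) vanishes at every point of the set. -/
def IsHarmonicOn {n : ℕ} (u : Eu n → ℝ) (Ω : Set (Eu n)) : Prop :=
  ContDiffOn ℝ 2 u Ω ∧ ∀ x ∈ Ω,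
    ∑ i, fderiv ℝ (fun y => fderiv ℝ u y (EuclideanSpace.single i 1)) x
      (EuclideanSpace.single i 1) = 0

/-- The divergence `div u(x) = ∑ⱼ ∂uⱼ/∂xⱼ (x)` of a vector field `u : ℝⁿ → ℝⁿ`. -/
def divg {n : ℕ} (u : Eu n → Eu n) (x : Eu n) : ℝ :=
  ∑ j, fderiv ℝ (fun y => u y j) x (EuclideanSpace.single j 1)

/-- The constant `D_n = (2 ω_{n-1}/ω_n) ∫₀^{π/2} (1 + n(n-2) cos²θ)^{1/2} sin^{n-2}θ dθ`. -/
def Dconst (n : ℕ) : ℝ :=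
  (2 * sphereArea (n - 1) / sphereArea n) *
    ∫ θ in (0:ℝ)..(π / 2),
      Real.sqrt (1 + (n : ℝ) * ((n : ℝ) - 2) * Real.cos θ ^ 2) * Real.sin θ ^ (n - 2)

/-- The map `(t,z) ↦ tν + z` from `ℝ × ν^⊥` preserves volume. -/
lemma split_mp {n : ℕ} (ν : Eu n) (hν : ‖ν‖ = 1) :
    MeasurePreserving (fun q : ℝ × (Submodule.span ℝ {ν})ᗮ => q.1 • ν + (q.2 : Eu n)) := by
  have h1 : MeasurePreserving (LinearIsometryEquiv.toSpanUnitSingleton (𝕜 := ℝ) ν hν) :=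
    (LinearIsometryEquiv.toSpanUnitSingleton ν hν).measurePreserving
  have h2 := h1.prod (MeasurePreserving.id (volume : Measure ((Submodule.span ℝ {ν})ᗮ)))
  have h3 := (WithLp.volume_preserving_toLp (U := Submodule.span ℝ {ν})
    (V := (Submodule.span ℝ {ν})ᗮ)).comp h2
  have h4 := ((Submodule.span ℝ {ν}).orthogonalDecomposition.symm).measurePreserving.comp h3
  convert h4 using 1
  · ext1 q
    rfl
  · rfl

lemma split_me {n : ℕ} (ν : Eu n) (hν : ‖ν‖ = 1) :
    MeasurableEmbedding (fun q : ℝ × (Submodule.span ℝ {ν})ᗮ => q.1 • ν + (q.2 : Eu n)) := by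
  refine Continuous.measurableEmbedding (by fun_prop) ?_
  rintro ⟨t, z⟩ ⟨t', z'⟩ h
  have key : ∀ (s : ℝ) (w : (Submodule.span ℝ {ν})ᗮ), ⟪ν, s • ν + (w : Eu n)⟫ = s := by
    intro s w
    have := Submodule.mem_orthogonal_singleton_iff_inner_right.1 w.2
    rw [inner_add_right, this, inner_smul_right, real_inner_self_eq_norm_sq, hν]; simp
  have ht : t = t' := by rw [← key t z, ← key t' z']; exact congrArg _ h
  subst ht
  simp only [add_right_inj] at h
  simp [Subtype.ext h]

lemma inner_perp {n : ℕ} {ν : Eu n} (w : (Submodule.span ℝ {ν})ᗮ) : ⟪(w : Eu n), ν⟫ = 0 :=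
  Submodule.mem_orthogonal_singleton_iff_inner_left.1 w.2

/-- The open half-space. -/
def HS {n : ℕ} (ν : Eu n) : Set (Eu n) := {y | 0 < ⟪y, ν⟫}

lemma HS_open {n : ℕ} (ν : Eu n) : IsOpen (HS ν) :=
  isOpen_lt continuous_const (by fun_prop)

lemma int_fderiv_cpt {n : ℕ} (f : Eu n → ℝ) (hf : ContDiff ℝ 1 f) (hc : HasCompactSupport f)
    (v : Eu n) : Integrable (fun y => fderiv ℝ f y v) := by
  apply Continuous.integrable_of_hasCompactSupport
  · have := hf.continuous_fderiv one_ne_zero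
    fun_prop
  · exact hc.fderiv_apply ℝ v

lemma hs_normal {n : ℕ} (ν : Eu n) (hν : ‖ν‖ = 1) (f : Eu n → ℝ) (hf : ContDiff ℝ 1 f)
    (hc : HasCompactSupport f) :
    ∫ y in HS ν, fderiv ℝ f y ν = - ∫ z : (Submodule.span ℝ {ν})ᗮ, f z := by
  have hfint := int_fderiv_cpt f hf hc ν
  rw [← (split_mp ν hν).setIntegral_preimage_emb (split_me ν hν)]
  have hpre : (fun q : ℝ × (Submodule.span ℝ {ν})ᗮ => q.1 • ν + (q.2 : Eu n)) ⁻¹' (HS ν)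
      = Set.Ioi 0 ×ˢ Set.univ := by
    ext ⟨t, z⟩
    simp [HS, inner_add_left, inner_smul_left, inner_perp, hν]
  have hfint2 : Integrable (fun q : ℝ × (Submodule.span ℝ {ν})ᗮ =>
      fderiv ℝ f (q.1 • ν + (q.2 : Eu n)) ν) (volume.prod volume) :=
    ((split_mp ν hν).integrable_comp_emb (split_me ν hν)).2 hfint
  rw [hpre]
  rw [show (volume : Measure (ℝ × (Submodule.span ℝ {ν})ᗮ)) = volume.prod volume from rfl]
  rw [← Measure.prod_restrict, Measure.restrict_univ, integral_prod_symm, ← integral_neg]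
  · refine integral_congr_ae (Eventually.of_forall fun z => ?_)
    dsimp only
    have hg : ContDiff ℝ 1 (fun t : ℝ => f (t • ν + (z : Eu n))) := by
      fun_prop
    have hgc : HasCompactSupport (fun t : ℝ => f (t • ν + (z : Eu n))) := by
      apply hc.comp_isClosedEmbedding (g := fun t : ℝ => t • ν + (z : Eu n))
      apply Isometry.isClosedEmbedding
      apply Isometry.of_dist_eq
      intro a b
      simp [dist_eq_norm, ← sub_smul, norm_smul, hν]
    have := hgc.integral_Ioi_deriv_eq hg 0
    simp only [zero_smul, zero_add] at this
    rw [← this]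
    refine integral_congr_ae (Eventually.of_forall fun t => ?_)
    dsimp only
    have h1 : HasFDerivAt f (fderiv ℝ f (t • ν + (z : Eu n))) (t • ν + (z : Eu n)) :=
      (hf.differentiable one_ne_zero _).hasFDerivAt
    have h2 : HasDerivAt (fun t : ℝ => t • ν + (z : Eu n)) ν t := by
      simpa using ((hasDerivAt_id t).smul_const ν).add_const (z : Eu n)
    exact (h1.comp_hasDerivAt t h2).deriv.symm
  · rw [← Measure.restrict_univ (μ := (volume : Measure ((Submodule.span ℝ {ν})ᗮ))),
      Measure.prod_restrict]
    exact hfint2.integrableOn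

lemma hs_tangent {n : ℕ} (ν : Eu n) (f : Eu n → ℝ) (hf : ContDiff ℝ 1 f)
    (hc : HasCompactSupport f) (v : Eu n) (hv : ⟪v, ν⟫ = 0) :
    ∫ y in HS ν, fderiv ℝ f y v = 0 := by
  have hfint := int_fderiv_cpt f hf hc v
  have hm := (HS_open ν).measurableSet
  rw [← integral_indicator hm]
  have := integral_bilinear_hasLineDerivAt_right_eq_neg_left_of_integrable
    (μ := (volume : Measure (Eu n))) (f := fun _ => (1:ℝ)) (f' := fun _ => (0:ℝ))
    (g := (HS ν).indicator f) (g' := (HS ν).indicator (fun y => fderiv ℝ f y v)) (v := v)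
    (B := ContinuousLinearMap.mul ℝ ℝ) (by simp) (by
      simpa using (hfint.indicator hm)) (by
      simpa using ((hf.continuous.integrable_of_hasCompactSupport hc).indicator hm))
    (by intro x _; simpa using (hasFDerivAt_const (1:ℝ) x).hasLineDerivAt v) (by
      intro x _
      have hl := (hf.differentiable one_ne_zero x).hasFDerivAt.hasLineDerivAt v
      unfold HasLineDerivAt at hl ⊢
      by_cases hx : x ∈ HS ν
      · have : ∀ t : ℝ, x + t • v ∈ HS ν := by
          intro t; simpa [HS, inner_add_left, inner_smul_left, hv] using hx
        simpa [Set.indicator_of_mem, hx, this] using hl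
      · have : ∀ t : ℝ, x + t • v ∉ HS ν := by
          intro t; simpa [HS, inner_add_left, inner_smul_left, hv] using hx
        simpa [Set.indicator_of_notMem, hx, this] using hasDerivAt_const (0:ℝ) (0:ℝ))
  simpa using this

lemma hs_div {n : ℕ} (ν : Eu n) (hν : ‖ν‖ = 1) (f : Eu n → ℝ) (hf : ContDiff ℝ 1 f)
    (hc : HasCompactSupport f) (v : Eu n) :
    ∫ y in HS ν, fderiv ℝ f y v = - (⟪v, ν⟫ * ∫ z : (Submodule.span ℝ {ν})ᗮ, f z) := by
  have h1 := hs_normal ν hν f hf hc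
  have h2 := hs_tangent ν f hf hc (v - ⟪v, ν⟫ • ν) (by
    rw [inner_sub_left, inner_smul_left, real_inner_self_eq_norm_sq, hν]; simp)
  simp only [map_sub, map_smul, smul_eq_mul] at h2
  rw [integral_sub (int_fderiv_cpt f hf hc v).integrableOn
    ((int_fderiv_cpt f hf hc ν).const_mul _).integrableOn, integral_const_mul, h1] at h2
  linarith

lemma whole_div {n : ℕ} (f : Eu n → ℝ) (hf : ContDiff ℝ 1 f)
    (hc : HasCompactSupport f) (v : Eu n) :
    ∫ y, fderiv ℝ f y v = 0 := by
  have := integral_mul_fderiv_eq_neg_fderiv_mul_of_integrable (μ := (volume : Measure (Eu n)))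
    (f := fun _ => (1:ℝ)) (g := f) (v := v) (by simp)
    (by simpa using int_fderiv_cpt f hf hc v)
    (by simpa using hf.continuous.integrable_of_hasCompactSupport hc)
    (fun x _ => differentiableAt_const _) (fun x _ => hf.differentiable one_ne_zero x)
  simpa using this

/-- partial derivative -/
def pd {n : ℕ} (i : Fin n) (f : Eu n → ℝ) (y : Eu n) : ℝ :=
  fderiv ℝ f y (EuclideanSpace.single i 1)

/-- Laplacian -/
def lap {n : ℕ} (f : Eu n → ℝ) (y : Eu n) : ℝ := ∑ i, pd i (pd i f) y

lemma pd_contDiff {n : ℕ} {i : Fin n} {f : Eu n → ℝ} {k l : WithTop ℕ∞} (hf : ContDiff ℝ l f)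
    (hkl : k + 1 ≤ l) : ContDiff ℝ k (pd i f) := by
  unfold pd
  exact (hf.fderiv_right hkl).clm_apply contDiff_const

lemma pd_mul {n : ℕ} {i : Fin n} {f g : Eu n → ℝ} {y : Eu n} (hf : DifferentiableAt ℝ f y)
    (hg : DifferentiableAt ℝ g y) :
    pd i (fun y => f y * g y) y = f y * pd i g y + g y * pd i f y := by
  unfold pd
  rw [fderiv_fun_mul hf hg]; simp

lemma pd_add {n : ℕ} {i : Fin n} {f g : Eu n → ℝ} {y : Eu n} (hf : DifferentiableAt ℝ f y)
    (hg : DifferentiableAt ℝ g y) :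
    pd i (fun y => f y + g y) y = pd i f y + pd i g y := by
  unfold pd
  rw [fderiv_fun_add hf hg]; simp

lemma pd_sub {n : ℕ} {i : Fin n} {f g : Eu n → ℝ} {y : Eu n} (hf : DifferentiableAt ℝ f y)
    (hg : DifferentiableAt ℝ g y) :
    pd i (fun y => f y - g y) y = pd i f y - pd i g y := by
  unfold pd
  rw [fderiv_fun_sub hf hg]; simp

lemma two_le' : (1 : WithTop ℕ∞) + 1 ≤ 2 := by norm_num

lemma pd_diff {n : ℕ} {i : Fin n} {f : Eu n → ℝ} (hf : ContDiff ℝ 2 f) :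
    Differentiable ℝ (pd i f) :=
  (pd_contDiff hf two_le').differentiable one_ne_zero

lemma lap_mul {n : ℕ} {f g : Eu n → ℝ} (hf : ContDiff ℝ 2 f) (hg : ContDiff ℝ 2 g) (y : Eu n) :
    lap (fun y => f y * g y) y
      = f y * lap g y + (2 * ∑ i, pd i f y * pd i g y + g y * lap f y) := by
  have df := hf.differentiable two_ne_zero
  have dg := hg.differentiable two_ne_zero
  unfold lap
  rw [Finset.mul_sum, Finset.mul_sum, Finset.mul_sum, ← Finset.sum_add_distrib,
    ← Finset.sum_add_distrib]
  refine Finset.sum_congr rfl fun i _ => ?_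
  have h1 : pd i (fun y => f y * g y) = fun y => f y * pd i g y + g y * pd i f y :=
    funext fun z => pd_mul (df z) (dg z)
  rw [h1, pd_add ((df y).fun_mul (pd_diff hg y)) ((dg y).fun_mul (pd_diff hf y)),
    pd_mul (df y) (pd_diff hg y), pd_mul (dg y) (pd_diff hf y)]
  ring

lemma lap_sub {n : ℕ} {f g : Eu n → ℝ} (hf : ContDiff ℝ 2 f) (hg : ContDiff ℝ 2 g) (y : Eu n) :
    lap (fun y => f y - g y) y = lap f y - lap g y := by
  have df := hf.differentiable two_ne_zero
  have dg := hg.differentiable two_ne_zero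
  unfold lap
  rw [← Finset.sum_sub_distrib]
  refine Finset.sum_congr rfl fun i _ => ?_
  have h1 : pd i (fun y => f y - g y) = fun y => pd i f y - pd i g y :=
    funext fun z => pd_sub (df z) (dg z)
  rw [h1, pd_sub (pd_diff hf y) (pd_diff hg y)]

lemma lap_cont {n : ℕ} {f : Eu n → ℝ} (hf : ContDiff ℝ 2 f) : Continuous (lap f) := by
  unfold lap
  refine continuous_finsetSum _ fun i _ => ?_
  exact (pd_contDiff (k := 0) (pd_contDiff hf two_le') (by simp)).continuous

lemma pd_cpt {n : ℕ} {i : Fin n} {f : Eu n → ℝ} (hf : HasCompactSupport f) :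
    HasCompactSupport (pd i f) := hf.fderiv_apply ℝ _

lemma lap_cpt {n : ℕ} {f : Eu n → ℝ} (hf : HasCompactSupport f) : HasCompactSupport (lap f) := by
  have h : ∀ s : Finset (Fin n), HasCompactSupport (fun y => ∑ i ∈ s, pd i (pd i f) y) := by
    intro s
    classical
    induction s using Finset.induction_on with
    | empty => exact HasCompactSupport.zero
    | insert a s ha ih =>
      simp only [Finset.sum_insert ha]
      exact (pd_cpt (pd_cpt hf)).add ih
  exact h Finset.univ

lemma fderiv_eq_sum {n : ℕ} (f : Eu n → ℝ) (y v : Eu n) :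
    fderiv ℝ f y v = ∑ i, v i * pd i f y := by
  unfold pd
  conv_lhs => rw [← (EuclideanSpace.basisFun (Fin n) ℝ).sum_repr v]
  simp [map_sum]

/-- Green's identity in the half-space against a function vanishing on the boundary. -/
lemma green {n : ℕ} (ν : Eu n) (hν : ‖ν‖ = 1) (f W : Eu n → ℝ) (hf : ContDiff ℝ 2 f)
    (hW : ContDiff ℝ 2 W) (hc : HasCompactSupport W) (hlap : ∀ y ∈ HS ν, lap f y = 0)
    (hW0 : ∀ z : (Submodule.span ℝ {ν})ᗮ, W z = 0) :
    ∫ y in HS ν, f y * lap W y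
      = - ∫ z : (Submodule.span ℝ {ν})ᗮ, f z * fderiv ℝ W z ν := by
  have df := hf.differentiable two_ne_zero
  have dW := hW.differentiable two_ne_zero
  set V : Fin n → Eu n → ℝ := fun i y => f y * pd i W y - W y * pd i f y with hV
  have hV1 : ∀ i, ContDiff ℝ 1 (V i) := fun i =>
    ((hf.of_le one_le_two).mul (pd_contDiff hW two_le')).sub
      ((hW.of_le one_le_two).mul (pd_contDiff hf two_le'))
  have hVc : ∀ i, HasCompactSupport (V i) := fun i =>
    ((pd_cpt hc).mul_left).sub (hc.mul_right)
  have h1 : ∀ y ∈ HS ν, f y * lap W y = ∑ i, fderiv ℝ (V i) y (EuclideanSpace.single i 1) := by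
    intro y hy
    have : ∀ i, fderiv ℝ (V i) y (EuclideanSpace.single i 1)
        = f y * pd i (pd i W) y - W y * pd i (pd i f) y := by
      intro i
      change pd i (fun y => f y * pd i W y - W y * pd i f y) y = _
      rw [pd_sub ((df y).fun_mul (pd_diff hW y)) ((dW y).fun_mul (pd_diff hf y)),
        pd_mul (df y) (pd_diff hW y), pd_mul (dW y) (pd_diff hf y)]
      ring
    simp_rw [this]
    rw [Finset.sum_sub_distrib, ← Finset.mul_sum, ← Finset.mul_sum]
    change _ = f y * lap W y - W y * lap f y
    rw [hlap y hy]; ring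
  rw [setIntegral_congr_fun (HS_open ν).measurableSet h1, integral_finsetSum _
    (fun i _ => (int_fderiv_cpt _ (hV1 i) (hVc i) _).integrableOn)]
  simp_rw [fun i => hs_div ν hν (V i) (hV1 i) (hVc i) (EuclideanSpace.single i 1)]
  rw [Finset.sum_neg_distrib]
  congr 1
  simp_rw [fderiv_eq_sum W _ ν, Finset.mul_sum]
  rw [integral_finsetSum]
  · refine Finset.sum_congr rfl fun i _ => ?_
    rw [← integral_const_mul]
    refine integral_congr_ae (Eventually.of_forall fun z => ?_)
    simp [hV, hW0, EuclideanSpace.inner_single_left]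
    ring
  · intro i _
    apply Continuous.integrable_of_hasCompactSupport
    · have := hf.continuous
      have := (pd_contDiff (i := i) hW two_le').continuous
      fun_prop
    · have : HasCompactSupport (fun z : (Submodule.span ℝ {ν})ᗮ => pd i W z) :=
        (pd_cpt hc).comp_isClosedEmbedding
          ((Submodule.closed_of_finiteDimensional _).isClosedEmbedding_subtypeVal)
      exact (this.mul_left).mul_left

/-- components of the (regularised) gradient of the fundamental solution, composed with an
affine isometry. -/
def gk {n : ℕ} (h : ℝ → ℝ) (S : Eu n ≃ₗᵢ[ℝ] Eu n) (x : Eu n) (j : Fin n) (y : Eu n) : ℝ :=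
  h (‖S y - x‖ ^ 2) * (S y - x) j

/-- the regularised delta function -/
def kk {n : ℕ} (h : ℝ → ℝ) (x : Eu n) (y : Eu n) : ℝ :=
  n * h (‖y - x‖ ^ 2) + 2 * (‖y - x‖ ^ 2 * deriv h (‖y - x‖ ^ 2))

lemma hasF_s {n : ℕ} (S : Eu n ≃ₗᵢ[ℝ] Eu n) (x y : Eu n) :
    HasFDerivAt (fun y => ‖S y - x‖ ^ 2)
      (2 • (innerSL ℝ (S y - x)).comp (S.toContinuousLinearEquiv : Eu n →L[ℝ] Eu n)) y := by
  have h1 : HasFDerivAt (fun y => S y - x) (S.toContinuousLinearEquiv : Eu n →L[ℝ] Eu n) y :=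
    (S.toContinuousLinearEquiv.hasFDerivAt).sub_const x
  exact h1.norm_sq

lemma hasF_h {n : ℕ} (S : Eu n ≃ₗᵢ[ℝ] Eu n) (x y : Eu n) (φ : ℝ → ℝ)
    (hφ : Differentiable ℝ φ) :
    HasFDerivAt (fun y => φ (‖S y - x‖ ^ 2))
      (deriv φ (‖S y - x‖ ^ 2) • (2 • (innerSL ℝ (S y - x)).comp
        (S.toContinuousLinearEquiv : Eu n →L[ℝ] Eu n))) y :=
  (hφ _).hasDerivAt.comp_hasFDerivAt y (hasF_s S x y)

lemma hasF_j {n : ℕ} (S : Eu n ≃ₗᵢ[ℝ] Eu n) (x y : Eu n) (j : Fin n) :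
    HasFDerivAt (fun y => (S y - x) j)
      ((EuclideanSpace.proj j : Eu n →L[ℝ] ℝ).comp
        (S.toContinuousLinearEquiv : Eu n →L[ℝ] Eu n)) y := by
  have h1 : HasFDerivAt (fun y => S y - x) (S.toContinuousLinearEquiv : Eu n →L[ℝ] Eu n) y :=
    (S.toContinuousLinearEquiv.hasFDerivAt).sub_const x
  exact (EuclideanSpace.proj j : Eu n →L[ℝ] ℝ).hasFDerivAt.comp y h1

lemma hasF_w {n : ℕ} (S : Eu n ≃ₗᵢ[ℝ] Eu n) (x y w : Eu n) :
    HasFDerivAt (fun y => ⟪w, S y - x⟫)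
      ((innerSL ℝ w).comp
        (S.toContinuousLinearEquiv : Eu n →L[ℝ] Eu n)) y := by
  have h1 : HasFDerivAt (fun y => S y - x) (S.toContinuousLinearEquiv : Eu n →L[ℝ] Eu n) y :=
    (S.toContinuousLinearEquiv.hasFDerivAt).sub_const x
  exact (innerSL ℝ w).hasFDerivAt.comp y h1

lemma gk_contDiff {n : ℕ} {h : ℝ → ℝ} (hh : ContDiff ℝ 3 h) (S : Eu n ≃ₗᵢ[ℝ] Eu n) (x : Eu n)
    (j : Fin n) : ContDiff ℝ 2 (gk h S x j) := by
  have h1 : ContDiff ℝ 2 (fun y => S y - x) := S.toContinuousLinearEquiv.contDiff.sub contDiff_const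
  have h2 : ContDiff ℝ 2 (fun y => (S y - x) j) :=
    (EuclideanSpace.proj j : Eu n →L[ℝ] ℝ).contDiff.comp h1
  exact ((hh.of_le (by norm_num)).comp (h1.norm_sq ℝ)).mul h2

lemma fderiv_gk {n : ℕ} {h : ℝ → ℝ} (hh : Differentiable ℝ h) (S : Eu n ≃ₗᵢ[ℝ] Eu n)
    (x y v : Eu n) (j : Fin n) :
    fderiv ℝ (gk h S x j) y v = h (‖S y - x‖ ^ 2) * (S v) j
      + (S y - x) j * (deriv h (‖S y - x‖ ^ 2) * (2 * ⟪S v, S y - x⟫)) := by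
  have := (hasF_h S x y h hh).mul (hasF_j S x y j)
  have h2 : HasFDerivAt (gk h S x j) _ y := this
  rw [h2.fderiv]
  rw [real_inner_comm (S y - x) (S v)]
  generalize S y - x = w
  simp

lemma deriv_cd {h : ℝ → ℝ} (hh : ContDiff ℝ 3 h) : ContDiff ℝ 2 (deriv h) := by
  have : ContDiff ℝ (2 + 1) h := by norm_num; exact hh
  exact (contDiff_succ_iff_deriv.1 this).2.2

lemma lap_gk {n : ℕ} {h : ℝ → ℝ} (hh : ContDiff ℝ 3 h) (S : Eu n ≃ₗᵢ[ℝ] Eu n)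
    (x y : Eu n) (j : Fin n) :
    lap (gk h S x j) y = (S y - x) j * ((2 * n + 4) * deriv h (‖S y - x‖ ^ 2)
      + 4 * ‖S y - x‖ ^ 2 * deriv (deriv h) (‖S y - x‖ ^ 2)) := by
  have dh := hh.differentiable (by norm_num)
  have ddh := (deriv_cd hh).differentiable two_ne_zero
  set z := S y - x with hz
  set b := (EuclideanSpace.basisFun (Fin n) ℝ).map S with hb
  have hbi : ∀ i, b i = S (EuclideanSpace.single i 1) := by intro i; simp [hb]
  have key : ∀ i, pd i (pd i (gk h S x j)) y =
      (4 * deriv h (‖z‖ ^ 2)) * (⟪z, b i⟫ * ⟪b i, EuclideanSpace.single j 1⟫)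
      + 2 * z j * deriv h (‖z‖ ^ 2)
      + (4 * z j * deriv (deriv h) (‖z‖ ^ 2)) * ⟪b i, z⟫ ^ 2 := by
    intro i
    have h1 : pd i (gk h S x j) = fun y => h (‖S y - x‖ ^ 2) * (b i) j
      + (S y - x) j * (deriv h (‖S y - x‖ ^ 2) * (2 * ⟪b i, S y - x⟫)) := by
      funext y; rw [hbi]; exact fderiv_gk dh S x y _ j
    rw [h1]
    have h2 := ((hasF_h S x y h dh).mul_const ((b i) j)).add ((hasF_j S x y j).mul
      ((hasF_h S x y _ ddh).mul ((hasF_w S x y (b i)).const_mul 2)))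
    have h3 : HasFDerivAt (fun y => h (‖S y - x‖ ^ 2) * (b i) j
      + (S y - x) j * (deriv h (‖S y - x‖ ^ 2) * (2 * ⟪b i, S y - x⟫))) _ y := h2
    unfold pd
    rw [h3.fderiv]
    have e1 : ⟪b i, b i⟫ = 1 := by rw [real_inner_self_eq_norm_sq]; simp
    simp only [add_apply, smul_apply, Pi.mul_apply,
      ContinuousLinearMap.comp_apply, ContinuousLinearEquiv.coe_coe, innerSL_apply_apply,
      LinearIsometryEquiv.coe_toContinuousLinearEquiv, ← hbi, ← hz, PiLp.proj_apply, e1,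
      smul_eq_mul, EuclideanSpace.inner_single_right]
    rw [real_inner_comm z (b i)]
    simp
    ring
  unfold lap
  simp_rw [key, Finset.sum_add_distrib, ← Finset.mul_sum]
  rw [OrthonormalBasis.sum_inner_mul_inner]
  have e2 : ∑ i, ⟪b i, z⟫ ^ 2 = ‖z‖ ^ 2 := by
    have := b.sum_sq_norm_inner_right z
    simpa using this
  rw [e2]
  simp [EuclideanSpace.inner_single_right]
  ring

lemma kk_contDiff {n : ℕ} {h : ℝ → ℝ} (hh : ContDiff ℝ 3 h) (x : Eu n) :
    ContDiff ℝ 2 (kk h x) := by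
  have h1 : ContDiff ℝ 2 (fun y : Eu n => ‖y - x‖ ^ 2) :=
    (contDiff_id.sub contDiff_const).norm_sq ℝ
  exact (contDiff_const.mul ((hh.of_le (by norm_num)).comp h1)).add
    (contDiff_const.mul (h1.mul ((deriv_cd hh).comp h1)))

lemma pd_kk {n : ℕ} {h : ℝ → ℝ} (hh : ContDiff ℝ 3 h) (x y : Eu n) (j : Fin n) :
    pd j (kk h x) y = lap (gk h (LinearIsometryEquiv.refl ℝ (Eu n)) x j) y := by
  have dh := hh.differentiable (by norm_num)
  have ddh := (deriv_cd hh).differentiable two_ne_zero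
  rw [lap_gk hh]
  have h2 := ((hasF_h (LinearIsometryEquiv.refl ℝ (Eu n)) x y h dh).const_mul (n:ℝ)).add
    (((hasF_s (LinearIsometryEquiv.refl ℝ (Eu n)) x y).mul
      (hasF_h (LinearIsometryEquiv.refl ℝ (Eu n)) x y _ ddh)).const_mul 2)
  have h3 : HasFDerivAt (kk h x) _ y := h2
  unfold pd
  rw [h3.fderiv]
  simp [EuclideanSpace.inner_single_right]
  ring

lemma exists_h (n : ℕ) (η : ℝ) (hη : 0 < η) : ∃ h : ℝ → ℝ, ContDiff ℝ 3 h ∧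
    (∀ s, η ^ 2 ≤ s → h s = s ^ (-(n:ℝ) / 2)) ∧
    (∀ s, 0 ≤ s → 0 ≤ n * h s + 2 * (s * deriv h s)) := by
  set θ : ℝ → ℝ := fun s => Real.smoothTransition (2 * s / η ^ 2 - 1) with hθ
  have hη2 : 0 < η ^ 2 := by positivity
  have cθ : ContDiff ℝ 3 θ := by
    have : ContDiff ℝ (3:ℕ∞) Real.smoothTransition := Real.smoothTransition.contDiff
    exact this.comp (by fun_prop)
  have mθ : Monotone θ := by
    intro a b hab
    apply Real.smoothTransition.monotone
    gcongr
  have zθ : ∀ s, s ≤ η ^ 2 / 2 → θ s = 0 := by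
    intro s hs
    apply Real.smoothTransition.zero_of_nonpos
    rw [sub_nonpos, div_le_one hη2]; linarith
  have oθ : ∀ s, η ^ 2 ≤ s → θ s = 1 := by
    intro s hs
    apply Real.smoothTransition.one_of_one_le
    rw [le_sub_iff_add_le, le_div_iff₀ hη2]; linarith
  refine ⟨fun s => s ^ (-(n:ℝ) / 2) * θ s, ?_, ?_, ?_⟩
  · rw [contDiff_iff_contDiffAt]
    intro s
    rcases lt_or_ge 0 s with hs | hs
    · exact (Real.contDiffAt_rpow_const_of_ne hs.ne').mul cθ.contDiffAt
    · have : (fun s : ℝ => s ^ (-(n:ℝ) / 2) * θ s) =ᶠ[nhds s] fun _ => 0 := by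
        filter_upwards [Iio_mem_nhds (show s < η ^ 2 / 2 by linarith [half_pos hη2])] with t ht
        rw [zθ t (le_of_lt ht), mul_zero]
      exact contDiffAt_const.congr_of_eventuallyEq this
  · intro s hs
    simp [oθ s hs]
  · intro s hs
    rcases hs.eq_or_lt with rfl | hs
    · simp [zθ 0 (by positivity)]
    · have h1 := (Real.hasDerivAt_rpow_const (x := s) (p := -(n:ℝ) / 2) (Or.inl hs.ne')).mul
        (cθ.differentiable (by norm_num) s).hasDerivAt
      have h2 : deriv (fun s => s ^ (-(n:ℝ) / 2) * θ s) s = _ := h1.deriv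
      rw [h2]
      have h3 : s * s ^ (-(n:ℝ) / 2 - 1) = s ^ (-(n:ℝ) / 2) := by
        rw [Real.rpow_sub_one hs.ne']; field_simp
      have h4 : 0 ≤ deriv θ s := mθ.deriv_nonneg
      have h5 : (n:ℝ) * (s ^ (-(n:ℝ) / 2) * θ s) + 2 * (s * (-(n:ℝ) / 2 * s ^ (-(n:ℝ) / 2 - 1) * θ s
          + s ^ (-(n:ℝ) / 2) * deriv θ s)) = 2 * s * s ^ (-(n:ℝ) / 2) * deriv θ s := by
        linear_combination (-(n:ℝ) * θ s) * h3
      rw [h5]; positivity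

lemma h_d1 {n : ℕ} {η : ℝ} (hη : 0 < η) {h : ℝ → ℝ}
    (hh : ∀ s, η ^ 2 ≤ s → h s = s ^ (-(n:ℝ) / 2)) {s : ℝ} (hs : η ^ 2 < s) :
    deriv h s = -(n:ℝ) / 2 * s ^ (-(n:ℝ) / 2 - 1) := by
  have hs0 : 0 < s := lt_trans (by positivity) hs
  have : h =ᶠ[nhds s] fun s => s ^ (-(n:ℝ) / 2) := by
    filter_upwards [Ioi_mem_nhds hs] with t ht using hh t (le_of_lt ht)
  rw [this.deriv_eq, Real.deriv_rpow_const]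

lemma h_d2 {n : ℕ} {η : ℝ} (hη : 0 < η) {h : ℝ → ℝ}
    (hh : ∀ s, η ^ 2 ≤ s → h s = s ^ (-(n:ℝ) / 2)) {s : ℝ} (hs : η ^ 2 < s) :
    deriv (deriv h) s = -(n:ℝ) / 2 * ((-(n:ℝ) / 2 - 1) * s ^ (-(n:ℝ) / 2 - 1 - 1)) := by
  have hs0 : 0 < s := lt_trans (by positivity) hs
  have : deriv h =ᶠ[nhds s] fun s => -(n:ℝ) / 2 * s ^ (-(n:ℝ) / 2 - 1) := by
    filter_upwards [Ioi_mem_nhds hs] with t ht using h_d1 hη hh ht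
  rw [this.deriv_eq, deriv_const_mul _ (Real.differentiableAt_rpow_const_of_ne _ hs0.ne'),
    Real.deriv_rpow_const]

lemma sphereArea_eq (n : ℕ) (hn : 1 ≤ n) :
    (n:ℝ) * (√π ^ n / Real.Gamma ((n:ℝ) / 2 + 1)) = sphereArea n := by
  have hn0 : (0:ℝ) < n := by exact_mod_cast hn
  unfold sphereArea
  rw [Real.Gamma_add_one (by positivity), Real.sqrt_eq_rpow, ← Real.rpow_natCast,
    ← Real.rpow_mul pi_pos.le]
  have : Real.Gamma ((n:ℝ)/2) ≠ 0 := (Real.Gamma_pos_of_pos (by positivity)).ne'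
  rw [show 1 / 2 * (n:ℝ) = n / 2 by ring]
  field_simp

lemma polar {F : Type*} [NormedAddCommGroup F] [InnerProductSpace ℝ F] [FiniteDimensional ℝ F]
    [MeasurableSpace F] [BorelSpace F] (n : ℕ) (hn : 1 ≤ n) (hF : Module.finrank ℝ F = n)
    (f : ℝ → ℝ) :
    ∫ z : F, f ‖z‖ = sphereArea n * ∫ r in Set.Ioi (0:ℝ), r ^ (n - 1) * f r := by
  have : Nontrivial F := Module.nontrivial_of_finrank_pos (R := ℝ) (by omega)
  rw [integral_fun_norm_addHaar, hF, ← sphereArea_eq n hn, Measure.real,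
    InnerProductSpace.volume_ball, hF]
  have : 0 ≤ √π ^ n / Real.Gamma ((n:ℝ) / 2 + 1) :=
    div_nonneg (by positivity) (Real.Gamma_pos_of_pos (by positivity)).le
  simp [ENNReal.toReal_ofReal this, mul_assoc]

lemma int_kk {n : ℕ} (hn : 1 ≤ n) {η : ℝ} (hη : 0 < η) {h : ℝ → ℝ} (hc : ContDiff ℝ 3 h)
    (hh : ∀ s, η ^ 2 ≤ s → h s = s ^ (-(n:ℝ) / 2))
    (hpos : ∀ s, 0 ≤ s → 0 ≤ n * h s + 2 * (s * deriv h s)) (x : Eu n) :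
    ∫ y, kk h x y = sphereArea n := by
  have h1 : ∫ y, kk h x y = ∫ y : Eu n, kk h 0 y := by
    rw [← integral_sub_right_eq_self (fun y : Eu n => kk h 0 y) x]
    simp [kk]
  rw [h1]
  have h2 := polar (F := Eu n) n hn (by simp)
    (fun r => n * h (r ^ 2) + 2 * (r ^ 2 * deriv h (r ^ 2)))
  have h3 : ∀ y : Eu n, kk h 0 y = n * h (‖y‖ ^ 2) + 2 * (‖y‖ ^ 2 * deriv h (‖y‖ ^ 2)) := by
    intro y; simp [kk]
  simp_rw [h3]
  rw [h2]
  have h4 : ∫ r in Set.Ioi (0:ℝ), r ^ (n - 1) * (n * h (r ^ 2) + 2 * (r ^ 2 * deriv h (r ^ 2)))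
      = 1 - (0:ℝ) ^ n * h (0 ^ 2) := by
    apply integral_Ioi_of_hasDerivAt_of_nonneg' (g := fun r : ℝ => r ^ n * h (r ^ 2))
    · intro r _
      have e1 : HasDerivAt (fun r : ℝ => h (r ^ 2)) (deriv h (r ^ 2) * (2 * r)) r := by
        have := (hc.differentiable (by norm_num) (r ^ 2)).hasDerivAt.comp r (hasDerivAt_pow 2 r)
        refine HasDerivAt.congr_deriv this ?_
        simp
      refine HasDerivAt.congr_deriv ((hasDerivAt_pow n r).mul e1) ?_
      obtain ⟨m, rfl⟩ : ∃ m, n = m + 1 := ⟨n - 1, by omega⟩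
      simp; ring
    · intro r hr
      exact mul_nonneg (pow_nonneg (le_of_lt hr) _) (hpos _ (sq_nonneg _))
    · apply tendsto_const_nhds.congr'
      filter_upwards [eventually_ge_atTop η] with r hr
      have hr0 : 0 < r := lt_of_lt_of_le hη hr
      rw [hh _ (by gcongr), ← Real.rpow_natCast r 2, ← Real.rpow_mul hr0.le, ← Real.rpow_natCast,
        ← Real.rpow_add hr0]
      rw [show (n:ℝ) + ((2:ℕ):ℝ) * (-n / 2) = 0 by push_cast; ring, Real.rpow_zero]
  rw [h4, zero_pow (by omega)]; simp

/-- boundary density -/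
def bdf (n : ℕ) (d r : ℝ) : ℝ :=
  2 * (d ^ 2 + r ^ 2) ^ (-(n:ℝ) / 2) * √(1 + n * (n - 2) * (d ^ 2 / (d ^ 2 + r ^ 2)))

lemma bdf_subst {n : ℕ} (hn : 2 ≤ n) {d : ℝ} (hd : 0 < d) {t : ℝ} (ht : t ∈ Set.Ioo 0 (π / 2)) :
    |d * (1 / Real.cos t ^ 2)| • ((d * Real.tan t) ^ (n - 2) * bdf n d (d * Real.tan t))
    = 2 / d * (√(1 + (n:ℝ) * ((n:ℝ) - 2) * Real.cos t ^ 2) * Real.sin t ^ (n - 2)) := by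
  have hc : 0 < Real.cos t := Real.cos_pos_of_mem_Ioo ⟨by linarith [ht.1, pi_pos], ht.2⟩
  have h1 : d ^ 2 + (d * Real.tan t) ^ 2 = (d / Real.cos t) ^ 2 := by
    rw [Real.tan_eq_sin_div_cos]
    field_simp
    exact Real.cos_sq_add_sin_sq t
  have h2 : ((d / Real.cos t) ^ 2) ^ (-(n:ℝ) / 2) = (Real.cos t / d) ^ n := by
    have hp : 0 < d / Real.cos t := by positivity
    rw [← Real.rpow_natCast (d / Real.cos t) 2, ← Real.rpow_mul hp.le,
      show ((2:ℕ):ℝ) * (-(n:ℝ) / 2) = -n by push_cast; ring, Real.rpow_neg hp.le,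
      Real.rpow_natCast, ← inv_pow, inv_div]
  have h3 : d ^ 2 / (d / Real.cos t) ^ 2 = Real.cos t ^ 2 := by field_simp
  unfold bdf
  rw [h1, h2, h3, abs_of_pos (by positivity), Real.tan_eq_sin_div_cos]
  obtain ⟨m, rfl⟩ : ∃ m, n = m + 2 := ⟨n - 2, by omega⟩
  simp only [Nat.add_sub_cancel, smul_eq_mul]
  rw [mul_pow, div_pow, div_pow]
  field_simp
  ring

lemma tan_image {d : ℝ} (hd : 0 < d) :
    (fun t => d * Real.tan t) '' Set.Ioo 0 (π / 2) = Set.Ioi 0 := by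
  ext r
  simp only [Set.mem_image, Set.mem_Ioi]
  constructor
  · rintro ⟨t, ht, rfl⟩
    exact mul_pos hd (Real.tan_pos_of_pos_of_lt_pi_div_two ht.1 ht.2)
  · intro hr
    refine ⟨Real.arctan (r / d), ⟨Real.arctan_pos.2 (by positivity), Real.arctan_lt_pi_div_two _⟩, ?_⟩
    rw [Real.tan_arctan]; field_simp

lemma tan_inj {d : ℝ} (hd : 0 < d) : Set.InjOn (fun t => d * Real.tan t) (Set.Ioo 0 (π / 2)) := by
  intro a ha b hb hab
  have : Real.tan a = Real.tan b := mul_left_cancel₀ hd.ne' hab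
  exact Real.tan_inj_of_lt_of_lt_pi_div_two (by linarith [ha.1, pi_pos]) ha.2
    (by linarith [hb.1, pi_pos]) hb.2 this

lemma tan_deriv {d : ℝ} : ∀ t ∈ Set.Ioo 0 (π / 2),
    HasDerivWithinAt (fun t => d * Real.tan t) (d * (1 / Real.cos t ^ 2)) (Set.Ioo 0 (π / 2)) t := by
  intro t ht
  have hc : 0 < Real.cos t := Real.cos_pos_of_mem_Ioo ⟨by linarith [ht.1, pi_pos], ht.2⟩
  exact ((Real.hasDerivAt_tan hc.ne').const_mul d).hasDerivWithinAt

lemma bdf_integral {n : ℕ} (hn : 2 ≤ n) {d : ℝ} (hd : 0 < d) :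
    IntegrableOn (fun r => r ^ (n - 2) * bdf n d r) (Set.Ioi 0) ∧
    sphereArea (n - 1) * ∫ r in Set.Ioi (0:ℝ), r ^ (n - 2) * bdf n d r
      = sphereArea n * (Dconst n / d) := by
  have hcont : Continuous (fun t => 2 / d * (√(1 + (n:ℝ) * ((n:ℝ) - 2) * Real.cos t ^ 2)
      * Real.sin t ^ (n - 2))) := by fun_prop
  constructor
  · rw [← tan_image hd, integrableOn_image_iff_integrableOn_abs_deriv_smul measurableSet_Ioo
      tan_deriv (tan_inj hd)]
    refine IntegrableOn.congr_fun ?_ (fun t ht => (bdf_subst hn hd ht).symm) measurableSet_Ioo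
    exact (hcont.integrableOn_Icc (a := 0) (b := π / 2)).mono_set Set.Ioo_subset_Icc_self
  · rw [← tan_image hd, integral_image_eq_integral_abs_deriv_smul measurableSet_Ioo
      tan_deriv (tan_inj hd), setIntegral_congr_fun measurableSet_Ioo
        (fun t ht => bdf_subst hn hd ht), integral_const_mul, ← integral_Ioc_eq_integral_Ioo,
      ← intervalIntegral.integral_of_le (by positivity)]
    unfold Dconst
    have : sphereArea n ≠ 0 := by
      unfold sphereArea
      have : 0 < Real.Gamma ((n:ℝ)/2) := Real.Gamma_pos_of_pos (by
        have : (0:ℝ) < n := by exact_mod_cast (by omega : 0 < n)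
        positivity)
      positivity
    field_simp

lemma finrank_perp {n : ℕ} (ν : Eu n) (hν : ‖ν‖ = 1) :
    Module.finrank ℝ (Submodule.span ℝ {ν})ᗮ = n - 1 := by
  have h0 : ν ≠ 0 := by rintro rfl; simp at hν
  have h1 := (Submodule.span ℝ {ν}).finrank_add_finrank_orthogonal
  rw [finrank_span_singleton h0, finrank_euclideanSpace_fin] at h1
  omega

lemma bdf_perp {n : ℕ} (hn : 2 ≤ n) {d : ℝ} (hd : 0 < d) (ν : Eu n) (hν : ‖ν‖ = 1) :
    Integrable (fun z : (Submodule.span ℝ {ν})ᗮ => bdf n d ‖z‖) ∧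
    ∫ z : (Submodule.span ℝ {ν})ᗮ, bdf n d ‖z‖ = sphereArea n * (Dconst n / d) := by
  have hf := finrank_perp ν hν
  have hnt : Nontrivial (Submodule.span ℝ {ν})ᗮ :=
    Module.nontrivial_of_finrank_pos (R := ℝ) (by omega)
  obtain ⟨h1, h2⟩ := bdf_integral hn hd
  constructor
  · rw [integrable_fun_norm_addHaar volume (f := fun r => bdf n d r), hf]
    simpa [Nat.sub_sub] using h1
  · rw [polar (n - 1) (by omega) hf (fun r => bdf n d r), ← h2]
    simp [Nat.sub_sub]

lemma pd_comp_smul {n : ℕ} (i : Fin n) (f : Eu n → ℝ) (hf : Differentiable ℝ f) (c : ℝ) :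
    pd i (fun y => f (c • y)) = fun y => c * pd i f (c • y) := by
  funext y
  unfold pd
  have h1 : HasFDerivAt (fun y : Eu n => c • y) (c • ContinuousLinearMap.id ℝ (Eu n)) y :=
    (hasFDerivAt_id y).const_smul c
  have h2 := (hf (c • y)).hasFDerivAt.comp y h1
  have h3 : HasFDerivAt (fun y => f (c • y)) _ y := h2
  rw [h3.fderiv]; simp

lemma pd_const_mul {n : ℕ} (i : Fin n) (f : Eu n → ℝ) (hf : Differentiable ℝ f) (c : ℝ) (y : Eu n) :
    pd i (fun y => c * f y) y = c * pd i f y := by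
  unfold pd
  rw [fderiv_const_mul (hf y)]; simp

lemma bdd_of_cpt {n : ℕ} (f : Eu n → ℝ) (hf : Continuous f) (hc : HasCompactSupport f) :
    ∃ C, 0 ≤ C ∧ ∀ y, |f y| ≤ C := by
  obtain ⟨C, hC⟩ := hc.exists_bound_of_continuous hf
  exact ⟨C, (norm_nonneg _).trans (hC 0), hC⟩

lemma cutoff (n : ℕ) : ∃ C, 0 ≤ C ∧ ∀ R : ℝ, 0 < R → ∃ ρ : Eu n → ℝ, ContDiff ℝ 2 ρ ∧
    (∀ y, 0 ≤ ρ y) ∧ (∀ y, ρ y ≤ 1) ∧ (∀ y, ‖y‖ ≤ R → ρ y = 1) ∧ (∀ y, 2 * R ≤ ‖y‖ → ρ y = 0) ∧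
    (∀ i y, |pd i ρ y| ≤ C / R) ∧ (∀ y, |lap ρ y| ≤ C / R ^ 2) := by
  let φ : ContDiffBump (0 : Eu n) := ⟨1, 2, one_pos, one_lt_two⟩
  have hφ : ContDiff ℝ 2 φ := φ.contDiff
  have dφ : Differentiable ℝ φ := hφ.differentiable two_ne_zero
  have hc : HasCompactSupport φ := φ.hasCompactSupport
  have h1 : ∀ i, ∃ C, 0 ≤ C ∧ ∀ y, |pd i φ y| ≤ C := fun i =>
    bdd_of_cpt _ (pd_contDiff hφ two_le').continuous (pd_cpt hc)
  choose C1 hC1 hC1' using h1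
  obtain ⟨C2, hC2, hC2'⟩ := bdd_of_cpt _ (lap_cont hφ) (lap_cpt hc)
  have hs : 0 ≤ ∑ i, C1 i := Finset.sum_nonneg fun i _ => hC1 i
  refine ⟨∑ i, C1 i + C2, by positivity, fun R hR => ⟨fun y => φ (R⁻¹ • y), ?_, ?_, ?_, ?_, ?_, ?_, ?_⟩⟩
  · exact hφ.comp (contDiff_const_smul R⁻¹)
  · intro y; exact φ.nonneg
  · intro y; exact φ.le_one
  · intro y hy
    apply φ.one_of_mem_closedBall
    simp only [mem_closedBall, dist_zero_right, norm_smul, norm_inv, Real.norm_eq_abs, abs_of_pos hR]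
    change R⁻¹ * ‖y‖ ≤ 1
    rw [inv_mul_le_iff₀ hR]; linarith
  · intro y hy
    apply φ.zero_of_le_dist
    simp only [dist_zero_right, norm_smul, norm_inv, Real.norm_eq_abs, abs_of_pos hR]
    change 2 ≤ R⁻¹ * ‖y‖
    rw [le_inv_mul_iff₀ hR]; linarith
  · intro i y
    rw [pd_comp_smul i _ dφ, abs_mul, abs_of_pos (inv_pos.2 hR), div_eq_inv_mul]
    gcongr
    calc _ ≤ C1 i := hC1' i _
      _ ≤ ∑ i, C1 i := Finset.single_le_sum (fun i _ => hC1 i) (Finset.mem_univ i)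
      _ ≤ _ := by linarith
  · intro y
    have : lap (fun y => φ (R⁻¹ • y)) y = (R ^ 2)⁻¹ * lap φ (R⁻¹ • y) := by
      unfold lap
      rw [Finset.mul_sum]
      refine Finset.sum_congr rfl fun i _ => ?_
      have hd : Differentiable ℝ (pd i φ) := pd_diff hφ
      rw [pd_comp_smul i _ dφ, pd_const_mul i (fun y => pd i φ (R⁻¹ • y))
        (hd.comp (by fun_prop)), pd_comp_smul i _ hd]
      simp only []
      rw [← inv_pow]; ring
    rw [this, abs_mul, abs_of_pos (by positivity), div_eq_inv_mul]
    gcongr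
    exact (hC2' _).trans (by linarith)

lemma sq_rpow {n : ℕ} {r : ℝ} (hr : 0 < r) : (r ^ 2) ^ (-(n:ℝ) / 2) = (1 / r) ^ n := by
  rw [← Real.rpow_natCast r 2, ← Real.rpow_mul hr.le,
      show ((2:ℕ):ℝ) * (-(n:ℝ) / 2) = -n by push_cast; ring, Real.rpow_neg hr.le,
      Real.rpow_natCast, ← inv_pow, one_div]

lemma gk_bounds {n : ℕ} {η : ℝ} (hη : 0 < η) {h : ℝ → ℝ} (hc : ContDiff ℝ 3 h)
    (hh : ∀ s, η ^ 2 ≤ s → h s = s ^ (-(n:ℝ) / 2)) (S : Eu n ≃ₗᵢ[ℝ] Eu n) (x y : Eu n) {r : ℝ}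
    (hr : η < r) (h1 : r ≤ ‖S y - x‖) (h2 : ‖S y - x‖ ≤ 5 * r) (j : Fin n) :
    |gk h S x j y| ≤ 5 * r * (1 / r) ^ n ∧ ∀ i, |pd i (gk h S x j) y| ≤ (n + 1) * (1 / r) ^ n := by
  have hr0 : 0 < r := hη.trans hr
  set w := S y - x with hw
  have hw0 : 0 < ‖w‖ := hr0.trans_le h1
  have hs : η ^ 2 < ‖w‖ ^ 2 := by gcongr; linarith
  have e1 : h (‖w‖ ^ 2) = (1 / ‖w‖) ^ n := by rw [hh _ hs.le, sq_rpow hw0]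
  have e2 : deriv h (‖w‖ ^ 2) = -(n:ℝ) / 2 * ((1 / ‖w‖) ^ n / ‖w‖ ^ 2) := by
    rw [h_d1 hη hh hs, Real.rpow_sub_one (by positivity), sq_rpow hw0]
  have b1 : (1 / ‖w‖) ^ n ≤ (1 / r) ^ n := by gcongr
  have hj : |w j| ≤ ‖w‖ := by simpa using PiLp.norm_apply_le w j
  constructor
  · unfold gk
    rw [← hw, e1, abs_mul, abs_of_pos (by positivity), mul_comm]
    gcongr
    linarith
  · intro i
    unfold pd
    rw [fderiv_gk (hc.differentiable (by norm_num)), ← hw, e1, e2]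
    set v := S (EuclideanSpace.single i 1) with hv
    have nv : ‖v‖ = 1 := by simp [hv]
    have hvj : |v j| ≤ 1 := by rw [← nv]; simpa using PiLp.norm_apply_le v j
    have hi : |⟪v, w⟫| ≤ ‖w‖ := by
      have := abs_real_inner_le_norm v w; rwa [nv, one_mul] at this
    have e3 : w j * (-(n:ℝ) / 2 * ((1 / ‖w‖) ^ n / ‖w‖ ^ 2) * (2 * ⟪v, w⟫))
        = -((n:ℝ) * (1 / ‖w‖) ^ n * ((w j / ‖w‖) * (⟪v, w⟫ / ‖w‖))) := by
      field_simp
    have a1 : |w j / ‖w‖| ≤ 1 := by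
      rw [abs_div, abs_of_pos hw0]; exact (div_le_one hw0).2 hj
    have a2 : |⟪v, w⟫ / ‖w‖| ≤ 1 := by
      rw [abs_div, abs_of_pos hw0]; exact (div_le_one hw0).2 hi
    have a3 : |(w j / ‖w‖) * (⟪v, w⟫ / ‖w‖)| ≤ 1 := by
      rw [abs_mul]; exact mul_le_one₀ a1 (abs_nonneg _) a2
    rw [e3]
    calc _ ≤ |(1 / ‖w‖) ^ n * v j| + |-((n:ℝ) * (1 / ‖w‖) ^ n * ((w j / ‖w‖) * (⟪v, w⟫ / ‖w‖)))| :=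
          abs_add_le _ _
      _ ≤ (1 / ‖w‖) ^ n * 1 + (n:ℝ) * (1 / ‖w‖) ^ n * 1 := by
          rw [abs_mul, abs_neg, abs_mul ((n:ℝ) * _), abs_of_pos (a := (1 / ‖w‖) ^ n) (by positivity),
            abs_of_nonneg (a := (n:ℝ) * (1 / ‖w‖) ^ n) (by positivity)]
          gcongr
      _ = (n + 1) * (1 / ‖w‖) ^ n := by ring
      _ ≤ _ := by gcongr

lemma lap_gk_zero {n : ℕ} {η : ℝ} (hη : 0 < η) {h : ℝ → ℝ} (hc : ContDiff ℝ 3 h)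
    (hh : ∀ s, η ^ 2 ≤ s → h s = s ^ (-(n:ℝ) / 2)) (S : Eu n ≃ₗᵢ[ℝ] Eu n) (x y : Eu n)
    (h1 : η < ‖S y - x‖) (j : Fin n) : lap (gk h S x j) y = 0 := by
  have hs : η ^ 2 < ‖S y - x‖ ^ 2 := by gcongr
  have hs0 : 0 < ‖S y - x‖ ^ 2 := lt_trans (by positivity) hs
  rw [lap_gk hc, h_d1 hη hh hs, h_d2 hη hh hs]
  set s := ‖S y - x‖ ^ 2
  rw [Real.rpow_sub_one hs0.ne' (-(n:ℝ) / 2 - 1)]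
  field_simp
  ring

lemma kk_zero {n : ℕ} {η : ℝ} (hη : 0 < η) {h : ℝ → ℝ}
    (hh : ∀ s, η ^ 2 ≤ s → h s = s ^ (-(n:ℝ) / 2)) (x y : Eu n)
    (h1 : η < ‖y - x‖) : kk h x y = 0 := by
  have hs : η ^ 2 < ‖y - x‖ ^ 2 := by gcongr
  have hs0 : 0 < ‖y - x‖ ^ 2 := lt_trans (by positivity) hs
  unfold kk
  rw [h_d1 hη hh hs, hh _ hs.le]
  set s := ‖y - x‖ ^ 2
  rw [Real.rpow_sub_one hs0.ne']
  field_simp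
  ring

lemma kk_cpt {n : ℕ} {η : ℝ} (hη : 0 < η) {h : ℝ → ℝ}
    (hh : ∀ s, η ^ 2 ≤ s → h s = s ^ (-(n:ℝ) / 2)) (x : Eu n) : HasCompactSupport (kk h x) := by
  apply HasCompactSupport.intro (isCompact_closedBall x η)
  intro y hy
  apply kk_zero hη hh
  simpa [dist_eq_norm] using hy

/-- reflection across the hyperplane -/
def Sr {n : ℕ} (ν : Eu n) : Eu n ≃ₗᵢ[ℝ] Eu n := ((Submodule.span ℝ {ν})ᗮ).reflection

lemma Sr_nu {n : ℕ} (ν : Eu n) : Sr ν ν = -ν :=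
  Submodule.reflection_orthogonalComplement_singleton_eq_neg ν

lemma Sr_perp {n : ℕ} (ν : Eu n) (z : (Submodule.span ℝ {ν})ᗮ) : Sr ν z = z :=
  Submodule.reflection_mem_subspace_eq_self z.2

lemma Sr_inner {n : ℕ} (ν y : Eu n) : ⟪Sr ν y, ν⟫ = -⟪y, ν⟫ := by
  have := (Sr ν).inner_map_map y ν
  rw [Sr_nu, inner_neg_right] at this
  linarith

lemma perp_norm {n : ℕ} (ν : Eu n) (hν : ‖ν‖ = 1) (d : ℝ) (z : (Submodule.span ℝ {ν})ᗮ) :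
    ‖(z : Eu n) - d • ν‖ ^ 2 = d ^ 2 + ‖z‖ ^ 2 := by
  rw [norm_sub_sq_real, inner_smul_right, inner_perp, norm_smul, hν, Submodule.norm_coe]
  simp; ring

/-- the kernel -/
def Fk {n : ℕ} (h : ℝ → ℝ) (ν x : Eu n) (j : Fin n) (y : Eu n) : ℝ :=
  gk h (Sr ν) x j y - gk h (LinearIsometryEquiv.refl ℝ (Eu n)) x j y

lemma Fk_contDiff {n : ℕ} {h : ℝ → ℝ} (hc : ContDiff ℝ 3 h) (ν x : Eu n) (j : Fin n) :
    ContDiff ℝ 2 (Fk h ν x j) := (gk_contDiff hc _ x j).sub (gk_contDiff hc _ x j)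

lemma Fk_perp {n : ℕ} {h : ℝ → ℝ} (ν x : Eu n) (j : Fin n) (z : (Submodule.span ℝ {ν})ᗮ) :
    Fk h ν x j z = 0 := by
  unfold Fk gk
  rw [Sr_perp]; simp

/-- boundary vector -/
def qv {n : ℕ} (h : ℝ → ℝ) (d : ℝ) (ν z : Eu n) : Eu n :=
  (-2 * h (‖z - d • ν‖ ^ 2)) • (ν + (n * d / ‖z - d • ν‖ ^ 2) • (z - d • ν))

lemma Fk_bdry {n : ℕ} {η : ℝ} (hη : 0 < η) {h : ℝ → ℝ} (hc : ContDiff ℝ 3 h)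
    (hh : ∀ s, η ^ 2 ≤ s → h s = s ^ (-(n:ℝ) / 2)) {d : ℝ} (hd : η < d) (ν : Eu n) (hν : ‖ν‖ = 1)
    (z : (Submodule.span ℝ {ν})ᗮ) (j : Fin n) :
    fderiv ℝ (Fk h ν (d • ν) j) z ν = qv h d ν z j := by
  have hs := perp_norm ν hν d z
  have hs1 : η ^ 2 < ‖(z : Eu n) - d • ν‖ ^ 2 := by
    rw [hs]; nlinarith [sq_nonneg ‖z‖]
  have hs0 : 0 < ‖(z : Eu n) - d • ν‖ ^ 2 := lt_trans (by positivity) hs1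
  have dh := hc.differentiable (by norm_num)
  have hi : ⟪ν, (z : Eu n) - d • ν⟫ = -d := by
    rw [inner_sub_right, real_inner_comm, inner_perp, inner_smul_right, real_inner_self_eq_norm_sq, hν]
    simp
  have d1 := ((gk_contDiff hc (Sr ν) (d • ν) j).differentiable two_ne_zero) z
  have d2 := ((gk_contDiff hc (LinearIsometryEquiv.refl ℝ (Eu n)) (d • ν) j).differentiable
    two_ne_zero) z
  have : fderiv ℝ (Fk h ν (d • ν) j) z ν = fderiv ℝ (gk h (Sr ν) (d • ν) j) z ν
      - fderiv ℝ (gk h (LinearIsometryEquiv.refl ℝ (Eu n)) (d • ν) j) z ν := by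
    unfold Fk
    rw [fderiv_fun_sub d1 d2]; rfl
  rw [this, fderiv_gk dh, fderiv_gk dh, Sr_perp, Sr_nu, inner_neg_left]
  simp only [LinearIsometryEquiv.coe_refl, id, hi]
  rw [h_d1 hη hh hs1, qv]
  simp only [PiLp.smul_apply, PiLp.add_apply, PiLp.neg_apply, smul_eq_mul]
  rw [hh _ hs1.le, Real.rpow_sub_one hs0.ne']
  ring

lemma qv_norm {n : ℕ} {η : ℝ} (hη : 0 < η) {h : ℝ → ℝ}
    (hh : ∀ s, η ^ 2 ≤ s → h s = s ^ (-(n:ℝ) / 2)) {d : ℝ} (hd : η < d) (ν : Eu n) (hν : ‖ν‖ = 1)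
    (z : (Submodule.span ℝ {ν})ᗮ) : ‖qv h d ν z‖ = bdf n d ‖z‖ := by
  have hs := perp_norm ν hν d z
  have hs1 : η ^ 2 < ‖(z : Eu n) - d • ν‖ ^ 2 := by
    rw [hs]; nlinarith [sq_nonneg ‖z‖]
  have hs0 : 0 < ‖(z : Eu n) - d • ν‖ ^ 2 := lt_trans (by positivity) hs1
  have hi : ⟪ν, (z : Eu n) - d • ν⟫ = -d := by
    rw [inner_sub_right, real_inner_comm, inner_perp, inner_smul_right, real_inner_self_eq_norm_sq, hν]
    simp
  unfold qv bdf
  rw [norm_smul, hh _ hs1.le, ← hs]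
  have h2 : ‖ν + (n * d / ‖(z:Eu n) - d • ν‖ ^ 2) • ((z:Eu n) - d • ν)‖ ^ 2
     = 1 + n * (n - 2) * (d ^ 2 / ‖(z:Eu n) - d • ν‖ ^ 2) := by
    rw [norm_add_sq_real, inner_smul_right, hi, norm_smul, hν, mul_pow, Real.norm_eq_abs, sq_abs]
    field_simp
    ring
  rw [← h2, Real.sqrt_sq (norm_nonneg _)]
  congr 1
  rw [norm_mul, Real.norm_of_nonneg (r := _ ^ (-(n:ℝ) / 2)) (by positivity)]
  norm_num

lemma pd_loc {n : ℕ} {f : Eu n → ℝ} {c : ℝ} {y : Eu n} (h : f =ᶠ[nhds y] fun _ => c) (i : Fin n) :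
    pd i f y = 0 := by
  unfold pd
  rw [h.fderiv_eq]; simp

lemma lap_loc {n : ℕ} {f : Eu n → ℝ} {c : ℝ} {y : Eu n} (h : f =ᶠ[nhds y] fun _ => c) :
    lap f y = 0 := by
  unfold lap
  refine Finset.sum_eq_zero fun i _ => ?_
  have : pd i f =ᶠ[nhds y] fun _ => 0 := by
    filter_upwards [h.eventually_nhds] with z hz using pd_loc hz i
  exact pd_loc this i

lemma pd_kk_zero {n : ℕ} {η : ℝ} (hη : 0 < η) {h : ℝ → ℝ} (hc : ContDiff ℝ 3 h)
    (hh : ∀ s, η ^ 2 ≤ s → h s = s ^ (-(n:ℝ) / 2)) (x y : Eu n) (h1 : η < ‖y - x‖) (j : Fin n) :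
    pd j (kk h x) y = 0 := by
  rw [pd_kk hc]
  exact lap_gk_zero hη hc hh (LinearIsometryEquiv.refl ℝ (Eu n)) x y
    (by rw [LinearIsometryEquiv.coe_refl, id]; exact h1) j

lemma lap_Fk {n : ℕ} {η : ℝ} (hη : 0 < η) {h : ℝ → ℝ} (hc : ContDiff ℝ 3 h)
    (hh : ∀ s, η ^ 2 ≤ s → h s = s ^ (-(n:ℝ) / 2)) {d : ℝ} (hd : η < d) (ν : Eu n) (hν : ‖ν‖ = 1)
    (y : Eu n) (hy : y ∈ HS ν) (j : Fin n) :
    lap (Fk h ν (d • ν) j) y = - pd j (kk h (d • ν)) y := by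
  unfold Fk
  rw [lap_sub (gk_contDiff hc _ _ j) (gk_contDiff hc _ _ j), ← pd_kk hc, lap_gk_zero hη hc hh, zero_sub]
  have h1 := abs_real_inner_le_norm (Sr ν y - d • ν) ν
  rw [inner_sub_left, Sr_inner, inner_smul_left, real_inner_self_eq_norm_sq, hν] at h1
  have hy' : 0 < ⟪y, ν⟫ := hy
  have := neg_le_abs (-⟪y, ν⟫ - (starRingEnd ℝ) d * 1 ^ 2)
  simp only [conj_trivial] at this h1
  linarith

lemma kk_parts {n : ℕ} {η : ℝ} (hη : 0 < η) {h : ℝ → ℝ} (hc : ContDiff ℝ 3 h)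
    (hh : ∀ s, η ^ 2 ≤ s → h s = s ^ (-(n:ℝ) / 2)) (x : Eu n) (f : Eu n → ℝ) (hf : ContDiff ℝ 2 f)
    (j : Fin n) : ∫ y, f y * pd j (kk h x) y = - ∫ y, kk h x y * pd j f y := by
  have hk := kk_contDiff hc x
  have hcp := kk_cpt hη hh x
  have h0 := whole_div (fun y => f y * kk h x y) ((hf.mul hk).of_le (by norm_num)) hcp.mul_left
    (EuclideanSpace.single j 1)
  have h1 : ∀ y, fderiv ℝ (fun y => f y * kk h x y) y (EuclideanSpace.single j 1)
      = f y * pd j (kk h x) y + kk h x y * pd j f y := fun y =>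
    pd_mul (hf.differentiable two_ne_zero y) (hk.differentiable two_ne_zero y)
  simp only [h1] at h0
  rw [integral_add] at h0
  · linarith
  · apply Continuous.integrable_of_hasCompactSupport
    · exact hf.continuous.mul (pd_contDiff hk two_le').continuous
    · exact (pd_cpt hcp).mul_left
  · apply Continuous.integrable_of_hasCompactSupport
    · exact hk.continuous.mul (pd_contDiff hf two_le').continuous
    · exact hcp.mul_right

/-- error term -/
def er {n : ℕ} (ρ F : Eu n → ℝ) (y : Eu n) : ℝ :=
  2 * ∑ i, pd i ρ y * pd i F y + F y * lap ρ y

lemma green_kk {n : ℕ} {η : ℝ} (hη : 0 < η) {h : ℝ → ℝ} (hc : ContDiff ℝ 3 h)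
    (hh : ∀ s, η ^ 2 ≤ s → h s = s ^ (-(n:ℝ) / 2)) {d : ℝ} (hd : η < d) (ν : Eu n) (hν : ‖ν‖ = 1)
    (f : Eu n → ℝ) (hf : ContDiff ℝ 2 f) (hlap : ∀ y ∈ HS ν, lap f y = 0)
    (R : ℝ) (hR : d + η ≤ R) (ρ : Eu n → ℝ) (hρ : ContDiff ℝ 2 ρ) (hρ1 : ∀ y, ‖y‖ ≤ R → ρ y = 1)
    (hρ0 : ∀ y, 2 * R ≤ ‖y‖ → ρ y = 0) (j : Fin n) :
    ∫ y, kk h (d • ν) y * pd j f y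
      = - (∫ z : (Submodule.span ℝ {ν})ᗮ, f z * (ρ z * qv h d ν z j))
        - ∫ y in HS ν, f y * er ρ (Fk h ν (d • ν) j) y := by
  have hF := Fk_contDiff hc ν (d • ν) j
  have hcp : HasCompactSupport ρ := by
    apply HasCompactSupport.intro (isCompact_closedBall 0 (2 * R))
    intro y hy
    apply hρ0
    simp at hy; exact hy.le
  have hg := green ν hν f (fun y => ρ y * Fk h ν (d • ν) j y) hf (hρ.mul hF) hcp.mul_right hlap
    (fun z => by rw [Fk_perp, mul_zero])
  have e1 : ∀ z : (Submodule.span ℝ {ν})ᗮ, fderiv ℝ (fun y => ρ y * Fk h ν (d • ν) j y) z ν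
      = ρ z * qv h d ν z j := by
    intro z
    rw [fderiv_fun_mul (hρ.differentiable two_ne_zero _) (hF.differentiable two_ne_zero _), Fk_perp]
    simp [Fk_bdry hη hc hh hd ν hν]
  simp only [e1] at hg
  have hnb : ∀ y, ‖y - d • ν‖ ≤ η → ‖y‖ ≤ R := by
    intro y hy
    have := norm_le_norm_sub_add y (d • ν)
    rw [norm_smul, hν, Real.norm_of_nonneg (hη.trans hd).le] at this
    linarith
  have e2 : ∀ y ∈ HS ν, f y * lap (fun y => ρ y * Fk h ν (d • ν) j y) y
      = -(f y * pd j (kk h (d • ν)) y) + f y * er ρ (Fk h ν (d • ν) j) y := by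
    intro y hy
    rw [lap_mul hρ hF, lap_Fk hη hc hh hd ν hν y hy, er]
    by_cases hb : ‖y - d • ν‖ ≤ η
    · rw [hρ1 y (hnb y hb)]; ring
    · rw [pd_kk_zero hη hc hh _ _ (not_le.1 hb)]; ring
  rw [setIntegral_congr_fun (HS_open ν).measurableSet e2] at hg
  have hk := kk_contDiff hc (d • ν)
  have i1 : Integrable (fun y => f y * pd j (kk h (d • ν)) y) := by
    apply Continuous.integrable_of_hasCompactSupport
    · exact hf.continuous.mul (pd_contDiff hk two_le').continuous
    · exact (pd_cpt (kk_cpt hη hh _)).mul_left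
  have i2 : Integrable (fun y => f y * er ρ (Fk h ν (d • ν) j) y) := by
    have e3 : (fun y => f y * er ρ (Fk h ν (d • ν) j) y) = fun y =>
        f y * lap (fun y => ρ y * Fk h ν (d • ν) j y) y - f y * (ρ y * lap (Fk h ν (d • ν) j) y) := by
      funext y
      rw [lap_mul hρ hF, er]; ring
    rw [e3]
    apply Integrable.sub
    · apply Continuous.integrable_of_hasCompactSupport
      · exact hf.continuous.mul (lap_cont (hρ.mul hF))
      · exact (lap_cpt hcp.mul_right).mul_left
    · apply Continuous.integrable_of_hasCompactSupport
      · exact hf.continuous.mul (hρ.continuous.mul (lap_cont hF))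
      · exact (hcp.mul_right).mul_left
  have i3 : Integrable (fun y => -(f y * pd j (kk h (d • ν)) y)) := i1.neg
  rw [integral_add i3.integrableOn i2.integrableOn, integral_neg,
    setIntegral_eq_integral_of_forall_compl_eq_zero, kk_parts hη hc hh _ f hf] at hg
  · linarith
  · intro y hy
    rw [pd_kk_zero hη hc hh, mul_zero]
    have hy' : ¬ 0 < ⟪y, ν⟫ := hy
    have h1 := abs_real_inner_le_norm (y - d • ν) ν
    rw [inner_sub_left, inner_smul_left, real_inner_self_eq_norm_sq, hν] at h1
    simp only [conj_trivial] at h1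
    have := neg_le_abs (⟪y, ν⟫ - d * 1 ^ 2)
    linarith

lemma er_zero {n : ℕ} {R : ℝ} (ρ F : Eu n → ℝ) (hρ1 : ∀ y, ‖y‖ ≤ R → ρ y = 1)
    (hρ0 : ∀ y, 2 * R ≤ ‖y‖ → ρ y = 0) (y : Eu n) (hy : ‖y‖ < R ∨ 2 * R < ‖y‖) : er ρ F y = 0 := by
  have : ∃ c, ρ =ᶠ[nhds y] fun _ => c := by
    rcases hy with hy | hy
    · refine ⟨1, ?_⟩
      filter_upwards [(isOpen_lt continuous_norm continuous_const).mem_nhds hy] with z hz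
        using hρ1 z (le_of_lt hz)
    · refine ⟨0, ?_⟩
      filter_upwards [(isOpen_lt continuous_const continuous_norm).mem_nhds hy] with z hz
        using hρ0 z (le_of_lt hz)
  obtain ⟨c, h⟩ := this
  simp [er, lap_loc h, pd_loc h]

lemma er_bound {n : ℕ} {η : ℝ} (hη : 0 < η) {h : ℝ → ℝ} (hc : ContDiff ℝ 3 h)
    (hh : ∀ s, η ^ 2 ≤ s → h s = s ^ (-(n:ℝ) / 2)) {d : ℝ} (hd : η < d) (ν : Eu n) (hν : ‖ν‖ = 1)
    {C R : ℝ} (hC : 0 ≤ C) (hR : 2 * d ≤ R) (ρ : Eu n → ℝ) (hρ1 : ∀ y, ‖y‖ ≤ R → ρ y = 1)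
    (hρ0 : ∀ y, 2 * R ≤ ‖y‖ → ρ y = 0) (h1 : ∀ i y, |pd i ρ y| ≤ C / R)
    (h2 : ∀ y, |lap ρ y| ≤ C / R ^ 2) (j : Fin n) (y : Eu n) :
    |er ρ (Fk h ν (d • ν) j) y| ≤ (4 * n * (n + 1) + 5) * (C / R) * (2 / R) ^ n := by
  have hd0 := hη.trans hd
  have hR0 : 0 < R := by linarith
  by_cases hy : ‖y‖ < R ∨ 2 * R < ‖y‖
  · rw [er_zero ρ _ hρ1 hρ0 y hy, abs_zero]; positivity
  push Not at hy
  obtain ⟨hy1, hy2⟩ := hy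
  have key : ∀ S : Eu n ≃ₗᵢ[ℝ] Eu n, |gk h S (d • ν) j y| ≤ 5 * (R / 2) * (1 / (R / 2)) ^ n ∧
      ∀ i, |pd i (gk h S (d • ν) j) y| ≤ (n + 1) * (1 / (R / 2)) ^ n := by
    intro S
    have a1 := norm_sub_norm_le (S y) (d • ν)
    have a2 := norm_sub_le (S y) (d • ν)
    rw [S.norm_map, norm_smul, hν, Real.norm_of_nonneg hd0.le] at a1 a2
    exact gk_bounds hη hc hh S _ y (r := R / 2) (by linarith) (by linarith) (by linarith) j
  rw [one_div_div] at key
  set P := (2 / R) ^ n with hP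
  have hP0 : 0 ≤ P := by positivity
  obtain ⟨k1, k2⟩ := key (Sr ν)
  obtain ⟨l1, l2⟩ := key (LinearIsometryEquiv.refl ℝ (Eu n))
  have b1 : |Fk h ν (d • ν) j y| ≤ 5 * R * P := by
    unfold Fk
    refine (abs_sub _ _).trans ?_
    linarith
  have b2 : ∀ i, |pd i (Fk h ν (d • ν) j) y| ≤ 2 * (n + 1) * P := by
    intro i
    unfold Fk
    rw [pd_sub ((gk_contDiff hc _ _ j).differentiable two_ne_zero y)
      ((gk_contDiff hc _ _ j).differentiable two_ne_zero y)]
    refine (abs_sub _ _).trans ?_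
    linarith [k2 i, l2 i]
  unfold er
  have b3 : |∑ i, pd i ρ y * pd i (Fk h ν (d • ν) j) y| ≤ n * (C / R * (2 * (n + 1) * P)) := by
    refine (Finset.abs_sum_le_sum_abs _ _).trans ?_
    refine (Finset.sum_le_card_nsmul _ _ (C / R * (2 * (n + 1) * P)) fun i _ => ?_).trans ?_
    · rw [abs_mul]
      exact mul_le_mul (h1 i y) (b2 i) (abs_nonneg _) (by positivity)
    · simp
  have b4 : |Fk h ν (d • ν) j y * lap ρ y| ≤ 5 * R * P * (C / R ^ 2) := by
    rw [abs_mul]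
    exact mul_le_mul b1 (h2 y) (abs_nonneg _) (by positivity)
  calc _ ≤ |2 * ∑ i, pd i ρ y * pd i (Fk h ν (d • ν) j) y| + |Fk h ν (d • ν) j y * lap ρ y| :=
        abs_add_le _ _
    _ ≤ 2 * (n * (C / R * (2 * (n + 1) * P))) + 5 * R * P * (C / R ^ 2) := by
        rw [abs_mul, abs_two]; gcongr
    _ = _ := by field_simp; ring

lemma abs_coord_le {n : ℕ} (w : Eu n) (j : Fin n) : |w j| ≤ ‖w‖ := by
  simpa using PiLp.norm_apply_le w j

lemma sum_eq_inner {n : ℕ} (v w : Eu n) : ∑ j, v j * w j = ⟪v, w⟫ := by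
  simp [PiLp.inner_apply, mul_comm]

set_option maxHeartbeats 1600000 in
lemma main_R {n : ℕ} (hn : 2 ≤ n) {η : ℝ} (hη : 0 < η) {h : ℝ → ℝ} (hc : ContDiff ℝ 3 h)
    (hh : ∀ s, η ^ 2 ≤ s → h s = s ^ (-(n:ℝ) / 2)) {d : ℝ} (hd : η < d) (ν : Eu n) (hν : ‖ν‖ = 1)
    (u : Eu n → Eu n) (hu : ∀ j, ContDiff ℝ 2 (fun y => u y j))
    (hlap : ∀ j, ∀ y ∈ HS ν, lap (fun y => u y j) y = 0) (M : ℝ) (hM0 : 0 ≤ M)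
    (hM : ∀ y, 0 ≤ ⟪y, ν⟫ → ‖u y‖ ≤ M) :
    ∃ K, ∀ R, 2 * d ≤ R → |∫ y, kk h (d • ν) y * divg u y|
      ≤ M * (sphereArea n * (Dconst n / d)) + K / R := by
  have hd0 := hη.trans hd
  obtain ⟨C, hC, hcut⟩ := cutoff n
  set V := volume.real (ball (0 : Eu n) 1) with hV
  set K0 : ℝ := (4 * n * (n + 1) + 5) with hK0
  refine ⟨n * (M * (K0 * C) * 4 ^ n * V), fun R hR => ?_⟩
  have hR0 : 0 < R := by linarith
  obtain ⟨ρ, hρ, hρn, hρl, hρ1, hρ0, p1, p2⟩ := hcut R hR0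
  have hk := kk_contDiff hc (d • ν)
  have hg := fun j => green_kk hη hc hh hd ν hν (fun y => u y j) (hu j) (hlap j) R (by linarith) ρ hρ
    hρ1 hρ0 j
  have s1 : ∫ y, kk h (d • ν) y * divg u y
      = ∑ j, ∫ y, kk h (d • ν) y * pd j (fun y => u y j) y := by
    rw [← integral_finsetSum]
    · congr 1; funext y
      rw [← Finset.mul_sum]; rfl
    · intro j _
      apply Continuous.integrable_of_hasCompactSupport
      · exact hk.continuous.mul (pd_contDiff (hu j) two_le').continuous
      · exact (kk_cpt hη hh _).mul_right
  obtain ⟨ib, eb⟩ := bdf_perp hn hd0 ν hν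
  have hMz : ∀ z : (Submodule.span ℝ {ν})ᗮ, ‖u z‖ ≤ M := fun z => hM z (inner_perp z).ge
  have i1 : ∀ j, Integrable (fun z : (Submodule.span ℝ {ν})ᗮ => u z j * (ρ z * qv h d ν z j)) := by
    intro j
    refine (ib.const_mul M).mono' ?_ ?_
    · apply Continuous.aestronglyMeasurable
      have e : (fun z : (Submodule.span ℝ {ν})ᗮ => u z j * (ρ z * qv h d ν z j))
          = fun z : (Submodule.span ℝ {ν})ᗮ =>
            u z j * (ρ z * fderiv ℝ (Fk h ν (d • ν) j) z ν) := by
        funext z; rw [Fk_bdry hη hc hh hd ν hν]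
      rw [e]
      have c1 := (hu j).continuous
      have c2 := (Fk_contDiff hc ν (d • ν) j).continuous_fderiv two_ne_zero
      have c3 := hρ.continuous
      have c4 : Continuous (fun z : (Submodule.span ℝ {ν})ᗮ => u z j) :=
        c1.comp continuous_subtype_val
      exact c4.mul ((c3.comp continuous_subtype_val).mul
        ((c2.comp continuous_subtype_val).clm_apply continuous_const))
    · filter_upwards with z
      rw [Real.norm_eq_abs, abs_mul, abs_mul, abs_of_nonneg (hρn _), ← qv_norm hη hh hd ν hν]
      have a1 := (abs_coord_le (u z) j).trans (hMz z)
      have a2 := abs_coord_le (qv h d ν z) j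
      have a3 : ρ z * |qv h d ν z j| ≤ 1 * ‖qv h d ν z‖ :=
        mul_le_mul (hρl _) a2 (abs_nonneg _) zero_le_one
      rw [one_mul] at a3
      exact mul_le_mul a1 a3 (mul_nonneg (hρn _) (abs_nonneg _)) hM0
  have s2 : |∑ j, ∫ z : (Submodule.span ℝ {ν})ᗮ, u z j * (ρ z * qv h d ν z j)|
      ≤ M * (sphereArea n * (Dconst n / d)) := by
    rw [← integral_finsetSum _ (fun j _ => i1 j), ← eb, ← integral_const_mul, ← Real.norm_eq_abs]
    refine norm_integral_le_of_norm_le (ib.const_mul M) ?_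
    filter_upwards with z
    have : ∑ j, u z j * (ρ z * qv h d ν z j) = ρ z * ⟪u z, qv h d ν z⟫ := by
      rw [← sum_eq_inner, Finset.mul_sum]
      exact Finset.sum_congr rfl fun j _ => by ring
    rw [this, Real.norm_eq_abs, abs_mul, abs_of_nonneg (hρn _), ← qv_norm hη hh hd ν hν]
    have a1 := (abs_real_inner_le_norm (u z) (qv h d ν z)).trans
      (mul_le_mul_of_nonneg_right (hMz z) (norm_nonneg _))
    calc _ ≤ 1 * (M * ‖qv h d ν z‖) := mul_le_mul (hρl _) a1 (abs_nonneg _) zero_le_one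
      _ = _ := one_mul _
  have s3 : ∀ j, |∫ y in HS ν, u y j * er ρ (Fk h ν (d • ν) j) y|
      ≤ M * (K0 * C) * 4 ^ n * V / R := by
    intro j
    have e1 : ∫ y in HS ν, u y j * er ρ (Fk h ν (d • ν) j) y
        = ∫ y in HS ν ∩ closedBall 0 (2 * R), u y j * er ρ (Fk h ν (d • ν) j) y := by
      apply setIntegral_eq_of_subset_of_forall_sdiff_eq_zero (HS_open ν).measurableSet
        Set.inter_subset_left
      intro y hy
      rw [er_zero ρ _ hρ1 hρ0 y, mul_zero]
      right
      by_contra hcon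
      exact hy.2 ⟨hy.1, by simpa using hcon⟩
    rw [e1, ← Real.norm_eq_abs]
    have hfin : volume (HS ν ∩ closedBall 0 (2 * R)) < ⊤ :=
      lt_of_le_of_lt (measure_mono Set.inter_subset_right) measure_closedBall_lt_top
    refine (norm_setIntegral_le_of_norm_le_const (C := M * (K0 * (C / R) * (2 / R) ^ n)) hfin ?_).trans ?_
    · intro y hy
      rw [norm_mul]
      refine mul_le_mul ?_ (er_bound hη hc hh hd ν hν hC hR ρ hρ1 hρ0 p1 p2 j y) (norm_nonneg _) hM0
      exact (abs_coord_le (u y) j).trans (hM y (le_of_lt hy.1))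
    · have v1 : volume.real (HS ν ∩ closedBall 0 (2 * R)) ≤ (2 * R) ^ n * V := by
        refine (measureReal_mono Set.inter_subset_right measure_closedBall_lt_top.ne).trans ?_
        rw [Measure.addHaar_real_closedBall _ _ (by positivity)]
        simp [hV]
      have : 0 ≤ M * (K0 * (C / R) * (2 / R) ^ n) := by positivity
      refine (mul_le_mul_of_nonneg_left v1 this).trans ?_
      apply le_of_eq
      rw [div_pow, mul_pow, show (4:ℝ) = 2 * 2 by norm_num, mul_pow]
      field_simp
  rw [s1, Finset.sum_congr rfl (fun j _ => hg j), Finset.sum_sub_distrib, Finset.sum_neg_distrib]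
  refine (abs_sub _ _).trans ?_
  rw [abs_neg]
  refine add_le_add s2 ?_
  refine (Finset.abs_sum_le_sum_abs _ _).trans ?_
  refine (Finset.sum_le_card_nsmul _ _ _ fun j _ => s3 j).trans ?_
  simp [mul_div_assoc]

lemma main_eta {n : ℕ} (hn : 2 ≤ n) {η : ℝ} (hη : 0 < η) {h : ℝ → ℝ} (hc : ContDiff ℝ 3 h)
    (hh : ∀ s, η ^ 2 ≤ s → h s = s ^ (-(n:ℝ) / 2)) {d : ℝ} (hd : η < d) (ν : Eu n) (hν : ‖ν‖ = 1)
    (u : Eu n → Eu n) (hu : ∀ j, ContDiff ℝ 2 (fun y => u y j))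
    (hlap : ∀ j, ∀ y ∈ HS ν, lap (fun y => u y j) y = 0) (M : ℝ) (hM0 : 0 ≤ M)
    (hM : ∀ y, 0 ≤ ⟪y, ν⟫ → ‖u y‖ ≤ M) :
    |∫ y, kk h (d • ν) y * divg u y| ≤ M * (sphereArea n * (Dconst n / d)) := by
  obtain ⟨K, hK⟩ := main_R hn hη hc hh hd ν hν u hu hlap M hM0 hM
  have ht : Tendsto (fun R : ℝ => M * (sphereArea n * (Dconst n / d)) + K / R) atTop
      (nhds (M * (sphereArea n * (Dconst n / d)) + 0)) :=
    tendsto_const_nhds.add (tendsto_const_nhds.div_atTop tendsto_id)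
  rw [add_zero] at ht
  exact ge_of_tendsto ht (by filter_upwards [eventually_ge_atTop (2 * d)] with R hR using hK R hR)

lemma sphereArea_pos {n : ℕ} (hn : 1 ≤ n) : 0 < sphereArea n := by
  unfold sphereArea
  have : (0:ℝ) < n := by exact_mod_cast hn
  have := Real.Gamma_pos_of_pos (half_pos this)
  positivity

lemma half_space {n : ℕ} (hn : 2 ≤ n) {d : ℝ} (hd : 0 < d) (ν : Eu n) (hν : ‖ν‖ = 1)
    (u : Eu n → Eu n) (hu : ∀ j, ContDiff ℝ 2 (fun y => u y j))
    (hlap : ∀ j, ∀ y ∈ HS ν, lap (fun y => u y j) y = 0) (M : ℝ) (hM0 : 0 ≤ M)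
    (hM : ∀ y, 0 ≤ ⟪y, ν⟫ → ‖u y‖ ≤ M) :
    |divg u (d • ν)| ≤ Dconst n / d * M := by
  have hA := sphereArea_pos (n := n) (by omega)
  have hcont : Continuous (divg u) := by
    unfold divg
    exact continuous_finsetSum _ fun j _ => (pd_contDiff (i := j) (hu j) two_le').continuous
  apply le_of_forall_pos_le_add
  intro ε hε
  obtain ⟨δ, hδ, hδ'⟩ := Metric.continuous_iff.1 hcont (d • ν) ε hε
  set η := min (d / 2) (δ / 2) with hη
  have hη0 : 0 < η := by positivity
  have hηd : η < d := lt_of_le_of_lt (min_le_left _ _) (by linarith)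
  have hηδ : η < δ := lt_of_le_of_lt (min_le_right _ _) (by linarith)
  obtain ⟨h, hc, hh, hpos⟩ := exists_h n η hη0
  have hm := main_eta hn hη0 hc hh hηd ν hν u hu hlap M hM0 hM
  have hik := int_kk (by omega) hη0 hc hh hpos (d • ν)
  have hk := kk_contDiff hc (d • ν)
  have hcp := kk_cpt hη0 hh (d • ν)
  have i0 : Integrable (kk h (d • ν)) := hk.continuous.integrable_of_hasCompactSupport hcp
  have i1 : Integrable (fun y => kk h (d • ν) y * divg u y) :=
    (hk.continuous.mul hcont).integrable_of_hasCompactSupport hcp.mul_right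
  have h1 : |∫ y, kk h (d • ν) y * (divg u y - divg u (d • ν))| ≤ ε * sphereArea n := by
    rw [← hik, ← integral_const_mul, ← Real.norm_eq_abs]
    refine norm_integral_le_of_norm_le (i0.const_mul ε) ?_
    filter_upwards with y
    have kn : 0 ≤ kk h (d • ν) y := hpos _ (by positivity)
    rw [norm_mul, Real.norm_of_nonneg kn, mul_comm]
    by_cases hy : ‖y - d • ν‖ ≤ η
    · gcongr
      exact (hδ' y (by rw [dist_eq_norm]; linarith)).le
    · rw [kk_zero hη0 hh _ _ (not_le.1 hy)]; simp
  have h2 : ∫ y, kk h (d • ν) y * (divg u y - divg u (d • ν))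
      = (∫ y, kk h (d • ν) y * divg u y) - sphereArea n * divg u (d • ν) := by
    simp only [mul_sub]
    rw [integral_sub i1 (i0.mul_const _), integral_mul_const, hik]
  rw [h2] at h1
  have h3 : |sphereArea n * divg u (d • ν)| ≤ M * (sphereArea n * (Dconst n / d)) + ε * sphereArea n := by
    have := abs_sub_abs_le_abs_sub (sphereArea n * divg u (d • ν)) (∫ y, kk h (d • ν) y * divg u y)
    rw [abs_sub_comm] at this
    linarith
  rw [abs_mul, abs_of_pos hA] at h3
  have : sphereArea n * |divg u (d • ν)| ≤ sphereArea n * (Dconst n / d * M + ε) := by linarith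
  exact le_of_mul_le_mul_left this hA

lemma pd_shift {n : ℕ} (i : Fin n) (f : Eu n → ℝ) (p : Eu n) :
    pd i (fun y => f (y + p)) = fun y => pd i f (y + p) := by
  funext y
  unfold pd
  rw [fderiv_comp_add_right]

lemma lap_shift {n : ℕ} (f : Eu n → ℝ) (p y : Eu n) :
    lap (fun y => f (y + p)) y = lap f (y + p) := by
  unfold lap
  simp only [pd_shift]

lemma pd_congr {n : ℕ} (i : Fin n) {f g : Eu n → ℝ} {y : Eu n} (h : f =ᶠ[nhds y] g) :
    pd i f y = pd i g y := by
  unfold pd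
  rw [h.fderiv_eq]

lemma lap_congr {n : ℕ} {f g : Eu n → ℝ} {y : Eu n} (h : f =ᶠ[nhds y] g) :
    lap f y = lap g y := by
  unfold lap
  refine Finset.sum_congr rfl fun i _ => pd_congr i ?_
  filter_upwards [h.eventually_nhds] with z hz using pd_congr i hz

lemma half_space_loc {n : ℕ} (hn : 2 ≤ n) {d : ℝ} (hd : 0 < d) (p ν : Eu n) (hν : ‖ν‖ = 1)
    {ε : ℝ} (hε : 0 < ε) (Ω : Set (Eu n)) (hΩ : IsOpen Ω) (hin : ∀ y, -(3 * ε) < ⟪y - p, ν⟫ → y ∈ Ω)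
    (u : Eu n → Eu n) (hu : ∀ j : Fin n, IsHarmonicOn (fun y => u y j) Ω)
    (M : ℝ) (hM0 : 0 ≤ M) (hM : ∀ y ∈ Ω, ‖u y‖ ≤ M) :
    |divg u (p + d • ν)| ≤ Dconst n / d * M := by
  set ψ : Eu n → ℝ := fun y => Real.smoothTransition (⟪y, ν⟫ / ε + 2) with hψ
  have hin' : ∀ y, -(3 * ε) < ⟪y, ν⟫ → y + p ∈ Ω := fun y hy => hin _ (by simpa using hy)
  have cψ : ContDiff ℝ 2 ψ :=
    Real.smoothTransition.contDiff.comp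
      (((contDiff_id.inner ℝ contDiff_const).div_const ε).add contDiff_const)
  have ψ1 : ∀ y, -ε ≤ ⟪y, ν⟫ → ψ y = 1 := by
    intro y hy
    apply Real.smoothTransition.one_of_one_le
    have : -1 ≤ ⟪y, ν⟫ / ε := by rw [le_div_iff₀ hε]; linarith
    linarith
  have ψ0 : ∀ y, ⟪y, ν⟫ ≤ -(2 * ε) → ψ y = 0 := by
    intro y hy
    apply Real.smoothTransition.zero_of_nonpos
    have : ⟪y, ν⟫ / ε ≤ -2 := by rw [div_le_iff₀ hε]; linarith
    linarith
  have cin : Continuous (fun y : Eu n => ⟪y, ν⟫) := by fun_prop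
  set v : Eu n → Eu n := fun y => ψ y • u (y + p) with hv
  have vj : ∀ j, (fun y => v y j) = fun y => ψ y * u (y + p) j := by
    intro j; funext y; simp [hv]
  have hloc : ∀ j y, -ε < ⟪y, ν⟫ → (fun y => v y j) =ᶠ[nhds y] fun y => u (y + p) j := by
    intro j y hy
    filter_upwards [(isOpen_lt continuous_const cin).mem_nhds hy] with z hz
    have hz' : -ε < ⟪z, ν⟫ := hz
    simp [hv, ψ1 z hz'.le]
  have cv : ∀ j, ContDiff ℝ 2 (fun y => v y j) := by
    intro j
    rw [vj, contDiff_iff_contDiffAt]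
    intro y
    by_cases hy : -(3 * ε) < ⟪y, ν⟫
    · refine cψ.contDiffAt.mul ?_
      have h1 : ContDiffAt ℝ 2 (fun y => u y j) (y + p) :=
        (hu j).1.contDiffAt (hΩ.mem_nhds (hin' y hy))
      exact h1.comp y (contDiff_id.add contDiff_const).contDiffAt
    · have hy' : ⟪y, ν⟫ < -(2 * ε) := by linarith
      have : (fun y => ψ y * u (y + p) j) =ᶠ[nhds y] fun _ => 0 := by
        filter_upwards [(isOpen_lt cin continuous_const).mem_nhds hy'] with z hz
        have hz' : ⟪z, ν⟫ < -(2 * ε) := hz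
        rw [ψ0 z hz'.le, zero_mul]
      exact contDiffAt_const.congr_of_eventuallyEq this
  have hlap : ∀ j, ∀ y ∈ HS ν, lap (fun y => v y j) y = 0 := by
    intro j y hy
    have hy' : 0 < ⟪y, ν⟫ := hy
    rw [lap_congr (hloc j y (by linarith)), lap_shift (fun y => u y j)]
    exact (hu j).2 _ (hin' y (by linarith))
  have hvM : ∀ y, 0 ≤ ⟪y, ν⟫ → ‖v y‖ ≤ M := by
    intro y hy
    have : v y = u (y + p) := by simp [hv, ψ1 y (by linarith)]
    rw [this]
    exact hM _ (hin' y (by linarith))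
  have key := half_space hn hd ν hν v cv hlap M hM0 hvM
  have e : divg v (d • ν) = divg u (p + d • ν) := by
    unfold divg
    refine Finset.sum_congr rfl fun j _ => ?_
    have hi : ⟪d • ν, ν⟫ = d := by
      rw [inner_smul_left, real_inner_self_eq_norm_sq, hν]; simp
    have h1 := pd_congr j (hloc j (d • ν) (by rw [hi]; linarith))
    rw [congrFun (pd_shift j (fun y => u y j) p) (d • ν), add_comm] at h1
    exact h1
  rwa [e] at key

lemma Dconst_nonneg {n : ℕ} (hn : 2 ≤ n) : 0 ≤ Dconst n := by
  unfold Dconst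
  have h1 := sphereArea_pos (n := n) (by omega)
  have h2 := sphereArea_pos (n := n - 1) (by omega)
  refine mul_nonneg (by positivity) ?_
  apply intervalIntegral.integral_nonneg (by positivity)
  intro θ hθ
  have := Real.sin_nonneg_of_nonneg_of_le_pi hθ.1 (by linarith [hθ.2, Real.pi_pos])
  positivity

/-- Let `n ≥ 2` and `Ω = ℝⁿ \ Ḡ` with `G` a convex domain in `ℝⁿ`.
If `u : Ω → ℝⁿ` is a vector field with bounded harmonic components (say `|u| ≤ M`
on `Ω`), then for every `x ∈ Ω`,
`|div u(x)| ≤ (D_n / d_x) · sup_Ω |u| ≤ (D_n / d_x) · M`. -/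
theorem divergence_bound_complement_convex
    (n : ℕ) (hn : 2 ≤ n) (G Ω : Set (Eu n))
    (hGo : IsOpen G) (hGc : Convex ℝ G) (hGne : G.Nonempty)
    (hΩ : Ω = (closure G)ᶜ)
    (u : Eu n → Eu n) (hu : ∀ j : Fin n, IsHarmonicOn (fun y => u y j) Ω)
    (M : ℝ) (hM : ∀ y ∈ Ω, ‖u y‖ ≤ M)
    (x : Eu n) (hx : x ∈ Ω) :
    |divg u x| ≤ Dconst n / Metric.infDist x (frontier Ω) * M := by
  have hM0 : 0 ≤ M := (norm_nonneg _).trans (hM x hx)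
  have hΩo : IsOpen Ω := by rw [hΩ]; exact isClosed_closure.isOpen_compl
  have hK : Convex ℝ (closure G) := hGc.closure
  obtain ⟨p, hp, hpmin⟩ := exists_norm_eq_iInf_of_complete_convex hGne.closure
    isClosed_closure.isComplete hK x
  have hpi := (norm_eq_iInf_iff_real_inner_le_zero hK hp).1 hpmin
  have hxp : x - p ≠ 0 := by
    intro h0
    rw [sub_eq_zero] at h0
    rw [hΩ] at hx
    exact hx (h0 ▸ hp)
  set δ := ‖x - p‖ with hδ
  have hδ0 : 0 < δ := norm_pos_iff.2 hxp
  set ν := δ⁻¹ • (x - p) with hν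
  have hν1 : ‖ν‖ = 1 := by
    rw [hν, norm_smul, norm_inv, Real.norm_of_nonneg hδ0.le, ← hδ]; field_simp
  have hxν : x = p + δ • ν := by
    rw [hν, smul_inv_smul₀ hδ0.ne']; abel
  have hhalf : ∀ y, 0 < ⟪y - p, ν⟫ → y ∈ Ω := by
    intro y hy
    rw [hΩ]
    intro hyG
    have h1 := hpi y hyG
    rw [hν, inner_smul_right, real_inner_comm] at hy
    have : 0 < δ⁻¹ := inv_pos.2 hδ0
    nlinarith
  have hbd : ∀ d, 0 < d → d < δ → |divg u x| ≤ Dconst n / d * M := by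
    intro d hd hdδ
    have h1 := half_space_loc hn hd (p + (δ - d) • ν) ν hν1 (ε := (δ - d) / 4) (by linarith) Ω hΩo
      (by
        intro y hy
        apply hhalf
        rw [← sub_sub, inner_sub_left, inner_smul_left, real_inner_self_eq_norm_sq, hν1] at hy
        simp only [conj_trivial] at hy
        linarith) u hu M hM0 hM
    have h2 : p + (δ - d) • ν + d • ν = x := by
      rw [add_assoc, ← add_smul, sub_add_cancel, ← hxν]
    rwa [h2] at h1
  have hlim : |divg u x| ≤ Dconst n / δ * M := by
    have ht : Tendsto (fun d : ℝ => Dconst n / d * M) (nhdsWithin δ (Set.Iio δ))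
        (nhds (Dconst n / δ * M)) := by
      have : ContinuousAt (fun d : ℝ => Dconst n / d * M) δ :=
        (continuousAt_const.div continuousAt_id hδ0.ne').mul continuousAt_const
      exact this.tendsto.mono_left nhdsWithin_le_nhds
    refine ge_of_tendsto ht ?_
    filter_upwards [Ioo_mem_nhdsLT hδ0] with d hd using hbd d hd.1 hd.2
  have hpf : p ∈ frontier Ω := by
    rw [frontier_eq_closure_inter_closure]
    refine ⟨?_, subset_closure (by rw [hΩ, compl_compl]; exact hp)⟩
    have ht : Tendsto (fun t : ℝ => p + t • ν) (nhdsWithin 0 (Set.Ioi 0)) (nhds (p + (0:ℝ) • ν)) := by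
      have : Continuous (fun t : ℝ => p + t • ν) := by fun_prop
      exact this.continuousAt.tendsto.mono_left nhdsWithin_le_nhds
    rw [zero_smul, add_zero] at ht
    refine mem_closure_of_tendsto ht ?_
    filter_upwards [self_mem_nhdsWithin] with t ht'
    apply hhalf
    rw [add_sub_cancel_left, inner_smul_left, real_inner_self_eq_norm_sq, hν1]
    simpa using ht'
  have hle : infDist x (frontier Ω) ≤ δ := by
    rw [hδ, ← dist_eq_norm]; exact infDist_le_dist_of_mem hpf
  have hpos : 0 < infDist x (frontier Ω) := by
    refine (isClosed_frontier.notMem_iff_infDist_pos ⟨p, hpf⟩).1 ?_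
    intro hxf
    rw [hΩo.frontier_eq] at hxf
    exact hxf.2 hx
  refine hlim.trans ?_
  have hD := Dconst_nonneg hn
  gcongr
end
end

section
/- Let n ≥ 2, R > 0, and let 𝔹_R be the open ball of radius R in ℝⁿ. For x ∈ 𝔹_R, let 𝒯_{n,R}(x) be the smallest constant such that |div u(x)| ≤ 𝒯_{n,R}(x)·‖g‖_{[L^∞(∂𝔹_R)]^n} for every vector field u that is the Poisson integral over ∂𝔹_R of g ∈ [L^∞(∂𝔹_R)]^n. Then 𝒯_{n,R}(x) = [2^{n−1} ω_{n−1} R^{n−1} / (ω_n (R+|x|)^{n−1} (R−|x|))] ∫₀^{π/2} Q_n(θ; |x|/R) sin^{n−2}θ dθ, where Q_n(θ; r) = [ (n−(n−2)r)² + 4 n(n−2) r cos²θ ]^{1/2} / [1 + ((1−r)/(1+r))² tan²θ]^{(n−2)/2}. -/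
open MeasureTheory Real Filter Metric
open scoped Real RealInnerProductSpace

noncomputable section

/-- Scaling map from the unit sphere onto the sphere of radius `R` in `ℝⁿ`. -/
def sphereScale (n : ℕ) (R : ℝ) (hR : 0 < R) (ω : Metric.sphere (0 : Eu n) 1) :
    Metric.sphere (0 : Eu n) R :=
  ⟨R • (ω : Eu n), by
    have h1 : ‖(ω : Eu n)‖ = 1 := by simpa using ω.2
    simp [mem_sphere_zero_iff_norm, norm_smul, h1, abs_of_pos hR]⟩

/-- The surface measure `σ` on the sphere of radius `R` in `ℝⁿ`: the pushforward
under the scaling map of `R^{n-1}` times the surface measure of the unit sphere. -/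
def sphereMeasureR (n : ℕ) (R : ℝ) (hR : 0 < R) : Measure (Metric.sphere (0 : Eu n) R) :=
  Measure.map (sphereScale n R hR) ((ENNReal.ofReal (R ^ (n - 1))) • (volume.toSphere))

/-- The function `Q_n(θ; r)` from the statement. -/
def Qfun (n : ℕ) (θ r : ℝ) : ℝ :=
  Real.sqrt (((n : ℝ) - ((n : ℝ) - 2) * r) ^ 2 +
      4 * (n : ℝ) * ((n : ℝ) - 2) * r * Real.cos θ ^ 2) /
    (1 + ((1 - r) / (1 + r)) ^ 2 * Real.tan θ ^ 2) ^ (((n : ℝ) - 2) / 2)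

/-- The claimed value of the sharp coefficient `𝒯_{n,R}(x)` (with `ρ = |x|`). -/
def TcoefR (n : ℕ) (R ρ : ℝ) : ℝ :=
  (2 ^ (n - 1) * sphereArea (n - 1) * R ^ (n - 1) /
      (sphereArea n * (R + ρ) ^ (n - 1) * (R - ρ))) *
    ∫ θ in (0:ℝ)..(π / 2), Qfun n θ (ρ / R) * Real.sin θ ^ (n - 2)

/-- The Poisson integral `u(x) = (1/(ωₙ R)) ∫_{∂𝔹_R} ((R²-|x|²)/|y-x|ⁿ) g(y) dσ_y` of a
vector-valued boundary function `g : ∂𝔹_R → ℝⁿ`. -/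
def poissonBallRV {n : ℕ} (R : ℝ) (hR : 0 < R)
    (g : Metric.sphere (0 : Eu n) R → Eu n) (x : Eu n) : Eu n :=
  (1 / (sphereArea n * R)) • ∫ y : Metric.sphere (0 : Eu n) R,
    ((R ^ 2 - ‖x‖ ^ 2) / ‖(y : Eu n) - x‖ ^ n) • g y ∂(sphereMeasureR n R hR)


lemma polar_lint {E : Type*} [NormedAddCommGroup E] [NormedSpace ℝ E] [MeasurableSpace E]
    [BorelSpace E] [FiniteDimensional ℝ E] [Nontrivial E] (μ : Measure E) [μ.IsAddHaarMeasure]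
    (F : E → ENNReal) :
    ∫⁻ x, F x ∂μ = ∫⁻ p : Metric.sphere (0 : E) 1 × Set.Ioi (0 : ℝ),
      F ((p.2 : ℝ) • (p.1 : E)) ∂(μ.toSphere.prod (Measure.volumeIoiPow (Module.finrank ℝ E - 1))) := by
  have h := μ.measurePreserving_homeomorphUnitSphereProd.lintegral_comp_emb
    (Homeomorph.measurableEmbedding _) (fun p => F ((p.2 : ℝ) • (p.1 : E)))
  rw [← h]
  have h2 : ∀ a : ({(0:E)}ᶜ : Set E), F (((homeomorphUnitSphereProd E a).2 : ℝ) •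
      ((homeomorphUnitSphereProd E a).1 : E)) = F a := by
    intro a
    congr 1
    have h0 : ‖(a : E)‖ ≠ 0 := norm_ne_zero_iff.2 a.2
    simp only [homeomorphUnitSphereProd_apply_fst_coe, homeomorphUnitSphereProd_apply_snd_coe]
    rw [smul_smul, mul_inv_cancel₀ h0, one_smul]
  simp only [h2]
  rw [lintegral_subtype_comap (measurableSet_singleton _).compl, restrict_compl_singleton]

lemma volIoi_lint (k : ℕ) (χ : ℝ → ENNReal) (hχ : Measurable χ) :
    ∫⁻ r : Set.Ioi (0:ℝ), χ r ∂(Measure.volumeIoiPow k)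
      = ∫⁻ r in Set.Ioi (0:ℝ), ENNReal.ofReal (r ^ k) * χ r := by
  rw [Measure.volumeIoiPow, lintegral_withDensity_eq_lintegral_mul _ (by fun_prop) (by fun_prop)]
  simp only [Pi.mul_apply]
  rw [lintegral_subtype_comap measurableSet_Ioi (fun r : ℝ => ENNReal.ofReal (r ^ k) * χ r)]

lemma radial_lint (m : ℕ) (χ : ℝ → ENNReal) (hχ : Measurable χ) :
    ∫⁻ z : Eu (m+1), χ ‖z‖ = (volume : Measure (Eu (m+1))).toSphere Set.univ *
      ∫⁻ r in Set.Ioi (0:ℝ), ENNReal.ofReal (r ^ m) * χ r := by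
  rw [polar_lint]
  have : ∀ p : Metric.sphere (0 : Eu (m+1)) 1 × Set.Ioi (0 : ℝ),
      χ ‖(p.2 : ℝ) • (p.1 : Eu (m+1))‖ = 1 * χ p.2 := by
    intro p
    have h1 : ‖(p.1 : Eu (m+1))‖ = 1 := by simpa using p.1.2
    have h2 : (0:ℝ) < p.2 := p.2.2
    rw [norm_smul, h1, mul_one, Real.norm_of_nonneg h2.le, one_mul]
  simp only [this]
  rw [lintegral_prod_mul (f := fun _ => 1) (g := fun r : Set.Ioi (0:ℝ) => χ r) (by fun_prop) (by fun_prop)]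
  rw [volIoi_lint _ _ hχ]
  simp

lemma sphere_area_eq (m : ℕ) : (volume : Measure (Eu (m+1))).toSphere Set.univ =
    ENNReal.ofReal (sphereArea (m+1)) := by
  rw [Measure.toSphere_apply_univ, EuclideanSpace.volume_ball, sphereArea]
  simp only [finrank_euclideanSpace, Fintype.card_fin]
  rw [ENNReal.ofReal_one, one_pow, one_mul, ← ENNReal.ofReal_natCast, ← ENNReal.ofReal_mul (by positivity)]
  congr 1
  have hpos : (0:ℝ) < ((m+1 : ℕ) : ℝ) / 2 := by positivity
  rw [Real.Gamma_add_one hpos.ne', Real.sqrt_eq_rpow, ← Real.rpow_natCast, ← Real.rpow_mul pi_pos.le]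
  have := (Real.Gamma_pos_of_pos hpos).ne'
  rw [show (1/2 : ℝ) * ((m+1 : ℕ) : ℝ) = ((m+1 : ℕ) : ℝ) / 2 by ring]
  field_simp

lemma split_lint (m : ℕ) (G : ℝ → ℝ → ENNReal) (hG : Measurable (Function.uncurry G)) :
    ∫⁻ x : Eu (m+2), G (x 0) ‖x‖ = ∫⁻ t : ℝ, ∫⁻ z : Eu (m+1), G t (√ (t^2 + ‖z‖^2)) := by
  rw [← (PiLp.volume_preserving_toLp (Fin (m+2))).lintegral_comp_emb
    (MeasurableEquiv.toLp 2 _).measurableEmbedding]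
  rw [← (volume_preserving_piFinSuccAbove (fun _ : Fin (m+2) => ℝ) 0).symm.lintegral_comp_emb
    (MeasurableEquiv.measurableEmbedding _)]
  rw [Measure.volume_eq_prod, lintegral_prod]
  · congr 1
    ext t
    rw [← (PiLp.volume_preserving_toLp (Fin (m+1))).lintegral_comp_emb
      (MeasurableEquiv.toLp 2 _).measurableEmbedding]
    congr 1
    ext z
    rw [EuclideanSpace.norm_eq, EuclideanSpace.norm_eq, Fin.sum_univ_succ, Real.sq_sqrt (by positivity)]
    simp [MeasurableEquiv.piFinSuccAbove, Fin.insertNthEquiv]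
  · apply Measurable.aemeasurable
    have : Measurable fun x : Eu (m+2) => G (x 0) ‖x‖ :=
      hG.comp (g := Function.uncurry G) (f := fun x : Eu (m+2) => (x 0, ‖x‖)) (by fun_prop)
    exact (this.comp (MeasurableEquiv.toLp 2 _).measurable).comp (MeasurableEquiv.measurable _)

lemma rot_lint (n : ℕ) (i : Fin n) (e : Eu n) (he : ‖e‖ = 1) (G : ℝ → ℝ → ENNReal) :
    ∫⁻ x : Eu n, G ⟪x, e⟫ ‖x‖ = ∫⁻ x : Eu n, G (x i) ‖x‖ := by
  set ρ := (Submodule.span ℝ {e - EuclideanSpace.single i 1})ᗮ.reflection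
  have h : ρ e = EuclideanSpace.single i 1 := Submodule.reflection_sub (by simp [he])
  rw [← ρ.measurePreserving.lintegral_comp_emb ρ.toHomeomorph.measurableEmbedding (fun x => G (x i) ‖x‖)]
  congr 1
  ext x
  rw [ρ.norm_map, ← ρ.inner_map_map, h, EuclideanSpace.inner_single_right]
  simp

lemma sphere_lint (m : ℕ) (e : Eu (m+2)) (he : ‖e‖ = 1) (f : ℝ → ENNReal) (hf : Measurable f) :
    ∫⁻ ω, f ⟪(ω : Eu (m+2)), e⟫ ∂(volume : Measure (Eu (m+2))).toSphere =
      ENNReal.ofReal (sphereArea (m+1)) *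
        ∫⁻ φ in Set.Ioo 0 π, f (cos φ) * ENNReal.ofReal (sin φ ^ m) := by
  set χ : ℝ → ENNReal := (Set.Iio 1).indicator 1 with hχd
  have hχ : Measurable χ := measurable_one.indicator measurableSet_Iio
  set K := ∫⁻ r in Set.Ioi (0:ℝ), ENNReal.ofReal (r ^ (m+1)) * χ r with hK
  have hKv : K = ENNReal.ofReal (1 / (m + 2)) := by
    rw [hK, ← volIoi_lint _ _ hχ]
    have := Measure.volumeIoiPow_apply_Iio (m+1) ⟨1, Set.mem_Ioi.2 one_pos⟩
    have h3 : (fun r : Set.Ioi (0:ℝ) => χ r) = (Set.Iio (⟨1, Set.mem_Ioi.2 one_pos⟩ : Set.Ioi (0:ℝ))).indicator 1 := by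
      ext r
      simp [hχd, Set.indicator, ← Subtype.coe_lt_coe]
    rw [h3, lintegral_indicator_one measurableSet_Iio, this]
    congr 1
    push_cast
    ring
  set G : ℝ → ℝ → ENNReal := fun t s => f (t / s) * χ s with hGd
  have hG : Measurable (Function.uncurry G) := by
    simp only [hGd, Function.uncurry_def]
    fun_prop
  have e1 : ∫⁻ x : Eu (m+2), G ⟪x, e⟫ ‖x‖ =
      (∫⁻ ω, f ⟪(ω : Eu (m+2)), e⟫ ∂(volume : Measure (Eu (m+2))).toSphere) * K := by
    rw [polar_lint]
    have : ∀ p : Metric.sphere (0 : Eu (m+2)) 1 × Set.Ioi (0 : ℝ),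
        G ⟪(p.2 : ℝ) • (p.1 : Eu (m+2)), e⟫ ‖(p.2 : ℝ) • (p.1 : Eu (m+2))‖ =
          f ⟪(p.1 : Eu (m+2)), e⟫ * χ p.2 := by
      intro p
      have h1 : ‖(p.1 : Eu (m+2))‖ = 1 := by simpa using p.1.2
      have h2 : (0:ℝ) < p.2 := p.2.2
      rw [norm_smul, h1, mul_one, Real.norm_of_nonneg h2.le, real_inner_smul_left]
      simp only [hGd]
      rw [mul_div_cancel_left₀ _ h2.ne']
    simp only [this]
    rw [lintegral_prod_mul (f := fun ω : Metric.sphere (0 : Eu (m+2)) 1 => f ⟪(ω : Eu (m+2)), e⟫)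
      (g := fun r : Set.Ioi (0:ℝ) => χ r) (by fun_prop) (by fun_prop)]
    rw [volIoi_lint _ _ hχ]
    simp [hK]
  set H : ℝ × ℝ → ENNReal := fun p => (Set.Ioi (0:ℝ)).indicator
      (fun s => ENNReal.ofReal (s ^ m) * G p.1 (√ (p.1^2 + s^2))) p.2 with hHd
  have hH : Measurable H := by
    have : H = (Prod.snd ⁻¹' (Set.Ioi (0:ℝ))).indicator
      (fun p => ENNReal.ofReal (p.2 ^ m) * G p.1 (√ (p.1^2 + p.2^2))) := by
      ext p
      simp [hHd, Set.indicator]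
    rw [this]
    refine Measurable.indicator ?_ (measurable_snd measurableSet_Ioi)
    refine Measurable.mul (by fun_prop) ?_
    exact hG.comp (g := Function.uncurry G) (f := fun p : ℝ × ℝ => (p.1, √ (p.1^2+p.2^2))) (by fun_prop)
  have e2 : ∫⁻ x : Eu (m+2), G ⟪x, e⟫ ‖x‖ = ENNReal.ofReal (sphereArea (m+1)) *
      ∫⁻ t : ℝ, ∫⁻ s : ℝ, (Set.Ioi (0:ℝ)).indicator
        (fun s => ENNReal.ofReal (s ^ m) * G t (√ (t^2 + s^2))) s := by
    rw [rot_lint _ 0 e he, split_lint _ _ hG, ← lintegral_const_mul]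
    · congr 1
      ext t
      rw [lintegral_indicator measurableSet_Ioi, ← sphere_area_eq]
      refine radial_lint m (fun s => G t (√ (t^2 + s^2))) ?_
      exact hG.comp (g := Function.uncurry G) (f := fun s : ℝ => (t, √ (t^2+s^2))) (by fun_prop)
    · exact hH.lintegral_prod_right'
  have e3 : ∫⁻ t : ℝ, ∫⁻ s : ℝ, (Set.Ioi (0:ℝ)).indicator
        (fun s => ENNReal.ofReal (s ^ m) * G t (√ (t^2 + s^2))) s =
      K * ∫⁻ φ in Set.Ioo 0 π, f (cos φ) * ENNReal.ofReal (sin φ ^ m) := by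
    calc _ = ∫⁻ p, H p := by rw [Measure.volume_eq_prod, lintegral_prod _ hH.aemeasurable]
      _ = ∫⁻ p in Set.Ioi (0:ℝ) ×ˢ Set.Ioo (-π) π, (ENNReal.ofReal (p.1^(m+1)) * χ p.1) *
           (Set.Ioo 0 π).indicator (fun φ => f (cos φ) * ENNReal.ofReal (sin φ ^ m)) p.2 := by
          rw [← lintegral_comp_polarCoord_symm]
          refine setLIntegral_congr_fun (measurableSet_Ioi.prod measurableSet_Ioo) ?_
          rintro ⟨r, φ⟩ ⟨hr, hφ⟩
          simp only [Set.mem_Ioi, Set.mem_Ioo] at hr hφ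
          simp only [polarCoord_symm_apply, smul_eq_mul, hHd]
          by_cases h : 0 < φ
          · have hs := sin_pos_of_pos_of_lt_pi h hφ.2
            rw [Set.indicator_of_mem (by simpa using mul_pos hr hs), Set.indicator_of_mem (by simp [h, hφ.2])]
            rw [show (r * cos φ)^2 + (r * sin φ)^2 = r^2 by
              rw [← mul_one (r^2), ← sin_sq_add_cos_sq φ]; ring, Real.sqrt_sq hr.le]
            simp only [hGd]
            rw [mul_div_cancel_left₀ _ hr.ne', mul_pow, ENNReal.ofReal_mul (by positivity), pow_succ,
              ENNReal.ofReal_mul (by positivity)]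
            ring
          · have hs : sin φ ≤ 0 := sin_nonpos_of_nonpos_of_neg_pi_le (not_lt.1 h) hφ.1.le
            rw [Set.indicator_of_notMem (by simpa using mul_nonpos_of_nonneg_of_nonpos hr.le hs), Set.indicator_of_notMem (by simp [h])]
            simp
      _ = _ := by
          rw [Measure.volume_eq_prod, ← Measure.prod_restrict]
          rw [lintegral_prod_mul (f := fun r : ℝ => ENNReal.ofReal (r^(m+1)) * χ r) (by fun_prop)]
          · rw [← hK, lintegral_indicator measurableSet_Ioo, Measure.restrict_restrict measurableSet_Ioo,
              Set.inter_eq_left.2 (Set.Ioo_subset_Ioo (by linarith [pi_pos]) le_rfl)]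
          · exact (Measurable.indicator (by fun_prop) measurableSet_Ioo).aemeasurable
  have hK0 : K ≠ 0 := by
    rw [hKv]; simp; positivity
  have hKt : K ≠ ⊤ := by rw [hKv]; simp
  rw [e2, e3, mul_left_comm] at e1
  rw [mul_comm _ K] at e1
  exact ((ENNReal.mul_right_inj hK0 hKt).1 e1).symm

def fprof (m : ℕ) (R ρ t : ℝ) : ℝ :=
  √ (4 * ρ^2 + 2 * (m+2) * (R^2-ρ^2) + (m+2) * m * (R^2-ρ^2)^2 / (R^2 + ρ^2 - 2*R*ρ*t)) /
    √ (R^2 + ρ^2 - 2*R*ρ*t) ^ (m+2)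

lemma sphere_int (m : ℕ) (e : Eu (m+2)) (he : ‖e‖ = 1) (f : ℝ → ℝ) (hf : Measurable f)
    (h0 : ∀ t, 0 ≤ f t) :
    ∫ ω, f ⟪(ω : Eu (m+2)), e⟫ ∂(volume : Measure (Eu (m+2))).toSphere =
      sphereArea (m+1) * ∫ φ in Set.Ioo 0 π, f (cos φ) * sin φ ^ m := by
  have hA : 0 ≤ sphereArea (m+1) := by
    have := (Real.Gamma_pos_of_pos (show (0:ℝ) < ((m+1 : ℕ) : ℝ) / 2 by positivity))
    unfold sphereArea
    positivity
  rw [integral_eq_lintegral_of_nonneg_ae (ae_of_all _ fun _ => h0 _)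
    (Measurable.aestronglyMeasurable (by fun_prop))]
  rw [sphere_lint m e he (fun t => ENNReal.ofReal (f t)) (by fun_prop), ENNReal.toReal_mul,
    ENNReal.toReal_ofReal hA]
  congr 1
  rw [integral_eq_lintegral_of_nonneg_ae]
  · congr 1
    refine setLIntegral_congr_fun measurableSet_Ioo fun φ hφ => ?_
    rw [ENNReal.ofReal_mul (h0 _)]
  · filter_upwards [ae_restrict_mem measurableSet_Ioo] with φ hφ
    have := sin_pos_of_pos_of_lt_pi hφ.1 hφ.2
    have := h0 (cos φ)
    simp only [Pi.zero_apply]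
    positivity
  · exact Measurable.aestronglyMeasurable (by fun_prop)

lemma subst_image (k : ℝ) (hk : 0 < k) :
    (fun θ => 2 * arctan (k * tan θ)) '' Set.Ioo 0 (π/2) = Set.Ioo 0 π := by
  ext φ
  constructor
  · rintro ⟨θ, hθ, rfl⟩
    have h1 := tan_pos_of_pos_of_lt_pi_div_two hθ.1 hθ.2
    have h2 : 0 < arctan (k * tan θ) := by
      rw [← arctan_zero]; exact arctan_strictMono (by positivity)
    have h3 := arctan_lt_pi_div_two (k * tan θ)
    constructor
    · simp only; linarith
    · simp only; linarith
  · rintro ⟨h1, h2⟩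
    have h3 := tan_pos_of_pos_of_lt_pi_div_two (x := φ/2) (by linarith) (by linarith)
    refine ⟨arctan (tan (φ/2) / k), ⟨?_, arctan_lt_pi_div_two _⟩, ?_⟩
    · rw [← arctan_zero]; exact arctan_strictMono (by positivity)
    · simp only
      rw [tan_arctan, mul_div_cancel₀ _ hk.ne', arctan_tan (by linarith) (by linarith)]
      ring

lemma subst_int (k : ℝ) (hk : 0 < k) (h : ℝ → ℝ) :
    ∫ φ in Set.Ioo 0 π, h φ = ∫ θ in Set.Ioo 0 (π/2),
      (2 * k * (1 + tan θ ^ 2) / (1 + (k * tan θ)^2)) * h (2 * arctan (k * tan θ)) := by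
  have hd : ∀ θ ∈ Set.Ioo 0 (π/2), HasDerivWithinAt (fun θ => 2 * arctan (k * tan θ))
      (2 * k * (1 + tan θ ^ 2) / (1 + (k * tan θ)^2)) (Set.Ioo 0 (π/2)) θ := by
    intro θ hθ
    have hc : cos θ ≠ 0 := (cos_pos_of_mem_Ioo ⟨by linarith [hθ.1, pi_pos], hθ.2⟩).ne'
    have := (((hasDerivAt_tan hc).const_mul k).arctan.const_mul 2).hasDerivWithinAt (s := Set.Ioo 0 (π/2))
    refine this.congr_deriv ?_
    rw [tan_eq_sin_div_cos]
    have h1 : 1 + (sin θ / cos θ)^2 = 1 / cos θ ^ 2 := by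
      field_simp
      rw [add_comm]; exact sin_sq_add_cos_sq θ
    rw [h1]
    ring_nf
  rw [← subst_image k hk, integral_image_eq_integral_abs_deriv_smul measurableSet_Ioo hd]
  · refine setIntegral_congr_fun measurableSet_Ioo fun θ hθ => ?_
    simp only [smul_eq_mul]
    rw [abs_of_nonneg (by positivity)]
  · intro a ha b hb hab
    have := arctan_injective (mul_left_cancel₀ (two_ne_zero' ℝ) hab)
    have := mul_left_cancel₀ hk.ne' this
    exact tan_inj_of_lt_of_lt_pi_div_two (by linarith [ha.1, pi_pos]) ha.2 (by linarith [hb.1, pi_pos]) hb.2 this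

lemma ptwise (m : ℕ) (R ρ : ℝ) (hρ : 0 ≤ ρ) (hρR : ρ < R) (θ : ℝ) (hθ : θ ∈ Set.Ioo 0 (π/2)) :
    (2 * ((R-ρ)/(R+ρ)) * (1 + tan θ ^ 2) / (1 + ((R-ρ)/(R+ρ) * tan θ)^2)) *
      (fprof m R ρ (cos (2 * arctan ((R-ρ)/(R+ρ) * tan θ))) *
        sin (2 * arctan ((R-ρ)/(R+ρ) * tan θ)) ^ m) =
    (2 ^ (m+1) * R / ((R+ρ)^(m+1) * (R-ρ))) * (Qfun (m+2) θ (ρ/R) * sin θ ^ m) := by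
  have hR : 0 < R := by linarith
  have hc : 0 < cos θ := cos_pos_of_mem_Ioo ⟨by linarith [hθ.1, pi_pos], hθ.2⟩
  have hs : sin θ = tan θ * cos θ := by rw [tan_mul_cos hc.ne']
  have hsc : 1 + tan θ ^ 2 = 1 / cos θ ^ 2 := by
    rw [eq_div_iff (by positivity)]
    have := sin_sq_add_cos_sq θ
    rw [hs] at this
    linarith
  set c := cos θ
  set s := tan θ
  have hm : 0 < R - ρ := by linarith
  have hp : 0 < R + ρ := by linarith
  set k := (R-ρ)/(R+ρ) with hk
  have hkr : (1 - ρ/R)/(1+ρ/R) = k := by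
    rw [hk]; field_simp
  set v := √ (1 + (k * s)^2) with hv
  have hv0 : 0 < v := Real.sqrt_pos.2 (by positivity)
  have hv2 : v^2 = 1 + (k * s)^2 := Real.sq_sqrt (by positivity)
  have hcos : cos (2 * arctan (k * s)) = 2 / v^2 - 1 := by
    rw [cos_two_mul, cos_sq_arctan, hv2]; ring
  have hsin : sin (2 * arctan (k * s)) = 2 * (k * s) / v^2 := by
    rw [sin_two_mul, sin_arctan, cos_arctan, ← hv]; field_simp
  have hd : R^2 + ρ^2 - 2*R*ρ*(2/v^2 - 1) = ((R-ρ)/(c*v))^2 := by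
    have e1 : R^2 + ρ^2 - 2*R*ρ*(2/v^2 - 1) = ((R+ρ)^2 * v^2 - 4*R*ρ)/v^2 := by
      field_simp; ring
    have e2 : (R+ρ)^2 * v^2 - 4*R*ρ = (R-ρ)^2 * (1 + s^2) := by
      rw [hv2, hk]; field_simp; ring
    rw [e1, e2, hsc]; field_simp
  have hcv : c^2 * v^2 * (R+ρ)^2 = (R-ρ)^2 + 4*R*ρ*c^2 := by
    have : c^2 * s^2 = 1 - c^2 := by
      have := hsc; field_simp at this; linarith
    have h2 : (R+ρ)^2 * (k*s)^2 = (R-ρ)^2 * s^2 := by rw [hk]; field_simp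
    rw [hv2]; linear_combination c^2 * h2 + (R-ρ)^2 * this
  have hN : 4 * ρ^2 + 2 * (m+2) * (R^2-ρ^2) + (m+2) * m * (R^2-ρ^2)^2 / ((R-ρ)/(c*v))^2 =
      R^2 * (((m+2 : ℕ) - ((m+2 : ℕ) - 2) * (ρ/R))^2 + 4 * ((m+2 : ℕ):ℝ) * ((m+2 : ℕ) - 2) * (ρ/R) * c^2) := by
    have e1 : (R^2-ρ^2)^2 / ((R-ρ)/(c*v))^2 = c^2 * v^2 * (R+ρ)^2 := by
      field_simp
      ring
    rw [mul_div_assoc, e1, hcv]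
    push_cast
    field_simp
    ring
  unfold fprof Qfun
  rw [hcos, hsin, hd, hN, hkr, ← mul_pow k s 2, ← hv2, hsc, Real.sqrt_mul (by positivity), Real.sqrt_sq hR.le,
    Real.sqrt_sq (by positivity), hs]
  have hw : (v^2) ^ ((((m+2 : ℕ):ℝ) - 2)/2) = v^m := by
    rw [← Real.rpow_natCast v 2, ← Real.rpow_mul hv0.le, ← Real.rpow_natCast v m]
    congr 1
    push_cast; ring
  rw [hw]
  set q := √ (((m+2 : ℕ) - ((m+2 : ℕ) - 2) * (ρ/R))^2 + 4 * ((m+2 : ℕ):ℝ) * ((m+2 : ℕ) - 2) * (ρ/R) * c^2)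
  clear_value q
  clear_value v
  rw [hk]
  simp only [mul_pow, div_pow]
  field_simp
  ring

lemma profile_int (m : ℕ) (R ρ : ℝ) (hρ : 0 ≤ ρ) (hρR : ρ < R) :
    ∫ φ in Set.Ioo 0 π, fprof m R ρ (cos φ) * sin φ ^ m =
     (2 ^ (m+1) * R / ((R+ρ)^(m+1) * (R-ρ))) *
      ∫ θ in (0:ℝ)..(π / 2), Qfun (m+2) θ (ρ / R) * Real.sin θ ^ m := by
  have hk : 0 < (R-ρ)/(R+ρ) := div_pos (by linarith) (by linarith)
  rw [subst_int _ hk, intervalIntegral.integral_of_le (by positivity), integral_Ioc_eq_integral_Ioo,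
    ← integral_const_mul]
  exact setIntegral_congr_fun measurableSet_Ioo fun θ hθ => ptwise m R ρ hρ hρR θ hθ

def Gk (m : ℕ) (R : ℝ) (z y : Eu (m+2)) : Eu (m+2) :=
  (-2 / ‖y - z‖ ^ (m+2)) • z + (((m:ℝ)+2) * (R^2 - ‖z‖^2) / ‖y - z‖ ^ (m+4)) • (y - z)

lemma hasFDerivAt_P (m : ℕ) (R : ℝ) (z y : Eu (m+2)) (hzy : y ≠ z) :
    HasFDerivAt (fun z : Eu (m+2) => (R ^ 2 - ‖z‖ ^ 2) / ‖y - z‖ ^ (m+2))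
      (innerSL ℝ (Gk m R z y)) z := by
  have hd : 0 < ‖y - z‖ := norm_pos_iff.2 (sub_ne_zero.2 hzy)
  have h1 : HasFDerivAt (fun z : Eu (m+2) => R ^ 2 - ‖z‖ ^ 2) (-((2:ℕ) • innerSL ℝ z)) z := by
    have := (hasStrictFDerivAt_norm_sq z).hasFDerivAt.const_sub (R^2)
    exact this
  have h2 : HasFDerivAt (fun w : Eu (m+2) => ‖w‖ ^ (m+2)) ((((m:ℝ)+2) * ‖y - z‖ ^ m) • innerSL ℝ (y - z)) (y - z) := by
    have := hasFDerivAt_norm_rpow (y - z) (p := ((m+2 : ℕ) : ℝ)) (by push_cast; linarith [(Nat.cast_nonneg m : (0:ℝ) ≤ m)])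
    simp only [Real.rpow_natCast] at this
    refine this.congr_fderiv ?_
    congr 2
    · push_cast; rfl
    · rw [← Real.rpow_natCast]
      congr 1
      push_cast; ring
  have h3 := h2.comp z ((hasFDerivAt_id z).const_sub y)
  have h5 := (hasDerivAt_inv (x := ‖y - z‖ ^ (m+2)) (by positivity)).comp_hasFDerivAt z h3
  have h4 := h1.mul h5
  have h6 : HasFDerivAt (fun z : Eu (m+2) => (R ^ 2 - ‖z‖ ^ 2) / ‖y - z‖ ^ (m+2)) _ z := h4
  refine h6.congr_fderiv ?_
  ext w
  simp only [Gk, Function.comp, id]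
  simp [inner_add_left, inner_smul_left, inner_sub_left, inner_sub_right]
  field_simp
  ring

lemma norm_Gk (m : ℕ) (R : ℝ) (z y : Eu (m+2)) (hy : ‖y‖ = R) (hzy : y ≠ z) (hz : ‖z‖ ≤ R):
    ‖Gk m R z y‖ = √ (4 * ‖z‖^2 + 2 * (m+2) * (R^2-‖z‖^2) + (m+2) * m * (R^2-‖z‖^2)^2 / ‖y-z‖^2) /
     ‖y - z‖ ^ (m+2) := by
  have hd : 0 < ‖y - z‖ := norm_pos_iff.2 (sub_ne_zero.2 hzy)
  have hin : 2 * ⟪z, y - z⟫ = R^2 - ‖z‖^2 - ‖y-z‖^2 := by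
    have := norm_add_sq_real z (y - z)
    rw [add_sub_cancel, hy] at this
    linarith
  rw [eq_div_iff (by positivity), ← abs_of_pos (show 0 < ‖y-z‖^(m+2) by positivity), ← Real.norm_eq_abs,
    mul_comm, ← norm_smul, ← Real.sqrt_sq (norm_nonneg _)]
  congr 1
  have e : ‖y-z‖^(m+2) • Gk m R z y = (-2:ℝ) • z + (((m:ℝ)+2) * (R^2 - ‖z‖^2) / ‖y - z‖ ^ 2) • (y - z) := by
    rw [Gk, smul_add, smul_smul, smul_smul]
    congr 2
    · field_simp
    · rw [show m + 4 = (m+2)+2 from rfl, pow_add _ (m+2) 2]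
      field_simp
  rw [e, norm_add_sq_real, norm_smul, norm_smul, real_inner_smul_left, real_inner_smul_right, mul_pow, mul_pow,
    Real.norm_eq_abs, Real.norm_eq_abs, sq_abs, sq_abs]
  have : ⟪z, y - z⟫ = (R^2 - ‖z‖^2 - ‖y-z‖^2)/2 := by linarith
  rw [this]
  field_simp
  ring

lemma Gk_meas (m : ℕ) (R : ℝ) (z : Eu (m+2)) :
    Measurable (fun y : Metric.sphere (0 : Eu (m+2)) R => Gk m R z y) := by
  unfold Gk
  fun_prop

lemma Gk_bound (m : ℕ) (R : ℝ) (z y : Eu (m+2)) (δ : ℝ) (hδ : 0 < δ) (hy : ‖y‖ = R) (hz : ‖z‖ ≤ R - δ) :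
    ‖Gk m R z y‖ ≤ 2 / δ^(m+2) * R + ((m:ℝ)+2) * R^2 / δ^(m+4) * (2 * R) := by
  have hR : 0 ≤ R := by linarith [norm_nonneg z]
  have h1 : δ ≤ ‖y - z‖ := by
    have := norm_sub_norm_le y z
    linarith
  have h2 : ‖y - z‖ ≤ 2 * R := by
    have := norm_sub_le y z
    linarith
  have h3 : 0 ≤ R^2 - ‖z‖^2 := by nlinarith [norm_nonneg z]
  have hd : 0 < ‖y - z‖ := by linarith
  unfold Gk
  refine (norm_add_le _ _).trans ?_
  rw [norm_smul, norm_smul]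
  have a1 : ‖-2 / ‖y - z‖ ^ (m+2)‖ ≤ 2 / δ^(m+2) := by
    rw [norm_div, norm_neg, Real.norm_of_nonneg (by positivity : 0 ≤ ‖y - z‖ ^ (m+2)), Real.norm_of_nonneg (by norm_num : (0:ℝ) ≤ 2)]
    gcongr
  have a2 : ‖((m:ℝ)+2) * (R^2 - ‖z‖^2) / ‖y - z‖ ^ (m+4)‖ ≤ ((m:ℝ)+2) * R^2 / δ^(m+4) := by
    rw [Real.norm_of_nonneg (by positivity)]
    gcongr
    linarith [sq_nonneg ‖z‖]
  gcongr
  linarith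

lemma scale_meas (n : ℕ) (R : ℝ) (hR : 0 < R) : Measurable (sphereScale n R hR) := by
  unfold sphereScale
  exact Measurable.subtype_mk (by fun_prop)

instance (n : ℕ) (R : ℝ) (hR : 0 < R) : IsFiniteMeasure (sphereMeasureR n R hR) := by
  unfold sphereMeasureR
  have : IsFiniteMeasure ((ENNReal.ofReal (R ^ (n - 1))) • ((volume : Measure (Eu n)).toSphere)) :=
    Measure.smul_finite _ ENNReal.ofReal_ne_top
  infer_instance

lemma smulRight_aesm {α E F : Type*} [MeasurableSpace α] {μ : Measure α} [NormedAddCommGroup E]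
    [NormedSpace ℝ E] [NormedAddCommGroup F] [NormedSpace ℝ F] {L : α → E →L[ℝ] ℝ} {g : α → F}
    (hL : AEStronglyMeasurable L μ) (hg : AEStronglyMeasurable g μ) :
    AEStronglyMeasurable (fun y => (L y).smulRight (g y)) μ :=
  (ContinuousLinearMap.smulRightL ℝ E F).aestronglyMeasurable_comp₂ hL hg

lemma divg_eq (m : ℕ) (R : ℝ) (hR : 0 < R) (x : Eu (m+2)) (hx : ‖x‖ < R)
    (g : Metric.sphere (0 : Eu (m+2)) R → Eu (m+2)) (hg : Measurable g)
    (hg1 : ∀ᵐ y ∂(sphereMeasureR (m+2) R hR), ‖g y‖ ≤ 1) :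
    divg (poissonBallRV R hR g) x = (1 / (sphereArea (m+2) * R)) *
      ∫ y, ⟪Gk m R x y, g y⟫ ∂(sphereMeasureR (m+2) R hR) := by
  set σ := sphereMeasureR (m+2) R hR
  set δ := (R - ‖x‖)/2 with hδ
  have hδ0 : 0 < δ := by rw [hδ]; linarith
  set C := 2 / δ^(m+2) * R + ((m:ℝ)+2) * R^2 / δ^(m+4) * (2 * R) with hC
  have hyn : ∀ y : Metric.sphere (0 : Eu (m+2)) R, ‖(y : Eu (m+2))‖ = R := fun y => by simpa using y.2
  have hzb : ∀ z ∈ Metric.ball x δ, ‖z‖ ≤ R - δ := by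
    intro z hz
    rw [mem_ball_iff_norm] at hz
    have := norm_le_norm_add_norm_sub' z x
    linarith
  have hF'm : AEStronglyMeasurable (fun y : Metric.sphere (0 : Eu (m+2)) R =>
      (innerSL ℝ (Gk m R x y)).smulRight (g y)) σ := by
    have h1 : AEStronglyMeasurable (fun y : Metric.sphere (0 : Eu (m+2)) R => innerSL ℝ (Gk m R x y)) σ :=
      ((innerSL ℝ).continuous.measurable.comp (Gk_meas m R x)).aestronglyMeasurable
    exact smulRight_aesm h1 hg.aestronglyMeasurable
  have hbd : ∀ᵐ y : Metric.sphere (0 : Eu (m+2)) R ∂σ, ∀ z ∈ Metric.ball x δ, ‖(innerSL ℝ (Gk m R z y)).smulRight (g y)‖ ≤ C := by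
    filter_upwards [hg1] with y hy z hz
    rw [ContinuousLinearMap.norm_smulRight_apply, innerSL_apply_norm]
    have := Gk_bound m R z y δ hδ0 (hyn y) (hzb z hz)
    calc _ ≤ C * 1 := by gcongr
      _ = C := mul_one _
  have hF0m : ∀ z : Eu (m+2), AEStronglyMeasurable (fun y : Metric.sphere (0 : Eu (m+2)) R =>
      ((R ^ 2 - ‖z‖ ^ 2) / ‖(y : Eu (m+2)) - z‖ ^ (m+2)) • g y) σ := by
    intro z
    exact Measurable.aestronglyMeasurable (by fun_prop)
  have hD : HasFDerivAt (fun z => ∫ y : Metric.sphere (0 : Eu (m+2)) R, ((R ^ 2 - ‖z‖ ^ 2) / ‖(y : Eu (m+2)) - z‖ ^ (m+2)) • g y ∂σ)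
      (∫ y : Metric.sphere (0 : Eu (m+2)) R, (innerSL ℝ (Gk m R x y)).smulRight (g y) ∂σ) x := by
    refine hasFDerivAt_integral_of_dominated_of_fderiv_le
      (F := fun z (y : Metric.sphere (0 : Eu (m+2)) R) => ((R ^ 2 - ‖z‖ ^ 2) / ‖(y : Eu (m+2)) - z‖ ^ (m+2)) • g y)
      (Metric.ball_mem_nhds x hδ0)
      (F' := fun z (y : Metric.sphere (0 : Eu (m+2)) R) => (innerSL ℝ (Gk m R z y)).smulRight (g y)) (bound := fun _ => C)
      (Eventually.of_forall hF0m) ?_ hF'm hbd (integrable_const _) ?_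
    · refine Integrable.of_bound (hF0m x) (R^2 / δ^(m+2)) ?_
      filter_upwards [hg1] with y hy
      have h1 : δ ≤ ‖(y : Eu (m+2)) - x‖ := by
        have := norm_sub_norm_le (y : Eu (m+2)) x
        rw [hyn] at this
        linarith
      have h3 : 0 ≤ R^2 - ‖x‖^2 := by nlinarith [norm_nonneg x]
      rw [norm_smul, Real.norm_of_nonneg (by positivity)]
      calc _ ≤ (R^2 / δ^(m+2)) * 1 := by
            gcongr
            linarith [sq_nonneg ‖x‖]
        _ = _ := mul_one _
    · refine ae_of_all _ fun y z hz => ?_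
      refine HasFDerivAt.smul_const (hasFDerivAt_P m R z y ?_) (g y)
      intro h
      have := hzb z hz
      rw [← h, hyn] at this
      linarith
  have hI' : Integrable (fun y : Metric.sphere (0 : Eu (m+2)) R =>
      (innerSL ℝ (Gk m R x y)).smulRight (g y)) σ := by
    refine Integrable.of_bound hF'm C ?_
    filter_upwards [hbd] with y hy using hy x (Metric.mem_ball_self hδ0)
  have hD2 := hD.const_smul (1 / (sphereArea (m+2) * R))
  have hcomp : ∀ j, fderiv ℝ (fun z => poissonBallRV R hR g z j) x (EuclideanSpace.single j 1) =
      (1 / (sphereArea (m+2) * R)) * ∫ y, (Gk m R x y) j * g y j ∂σ := by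
    intro j
    have h := ((EuclideanSpace.proj j : Eu (m+2) →L[ℝ] ℝ).hasFDerivAt).comp x hD2
    have h' : HasFDerivAt (fun z => poissonBallRV R hR g z j) _ x := h
    rw [h'.fderiv]
    simp only [ContinuousLinearMap.comp_apply, ContinuousLinearMap.smul_apply, map_smul, smul_eq_mul]
    congr 1
    rw [ContinuousLinearMap.integral_apply hI', ← ContinuousLinearMap.integral_comp_comm _
      (hI'.apply_continuousLinearMap _)]
    congr 1
    ext y
    simp [EuclideanSpace.inner_single_right]
  unfold divg
  simp only [hcomp]
  rw [← Finset.mul_sum, ← integral_finset_sum]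
  · congr 2
    ext y
    simp [PiLp.inner_apply, mul_comm]
  · intro j _
    have := (((EuclideanSpace.proj j : Eu (m+2) →L[ℝ] ℝ).integrable_comp
      (hI'.apply_continuousLinearMap (EuclideanSpace.single j 1))))
    refine this.congr (ae_of_all _ fun y => ?_)
    simp [EuclideanSpace.inner_single_right]

lemma int_Gk (m : ℕ) (R : ℝ) (hR : 0 < R) (x : Eu (m+2)) (hx : ‖x‖ < R) :
    (1 / (sphereArea (m+2) * R)) * ∫ y, ‖Gk m R x y‖ ∂(sphereMeasureR (m+2) R hR) =
      TcoefR (m+2) R ‖x‖ := by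
  obtain ⟨e, he, hxe⟩ : ∃ e : Eu (m+2), ‖e‖ = 1 ∧ x = ‖x‖ • e := by
    by_cases h : x = 0
    · exact ⟨EuclideanSpace.single 0 1, by simp, by simp [h]⟩
    · have h0 := norm_ne_zero_iff.2 h
      exact ⟨‖x‖⁻¹ • x, by simp [norm_smul, h0], by rw [smul_smul, mul_inv_cancel₀ h0, one_smul]⟩
  have hfm : Measurable (fprof m R ‖x‖) := by unfold fprof; fun_prop
  have hf0 : ∀ t, 0 ≤ fprof m R ‖x‖ t := fun t => by unfold fprof; positivity
  rw [sphereMeasureR, integral_map (scale_meas _ _ _).aemeasurable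
    (Gk_meas m R x).norm.aestronglyMeasurable, integral_smul_measure]
  have key : ∀ ω : Metric.sphere (0 : Eu (m+2)) 1, ‖Gk m R x (sphereScale (m+2) R hR ω)‖ =
      fprof m R ‖x‖ ⟪(ω : Eu (m+2)), e⟫ := by
    intro ω
    have hω : ‖(ω : Eu (m+2))‖ = 1 := by simpa using ω.2
    have hn : ‖((sphereScale (m+2) R hR ω : Metric.sphere (0 : Eu (m+2)) R) : Eu (m+2))‖ = R := by
      simpa using (sphereScale (m+2) R hR ω).2
    have hd : ‖((sphereScale (m+2) R hR ω : Metric.sphere (0 : Eu (m+2)) R) : Eu (m+2)) - x‖ =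
        √ (R^2 + ‖x‖^2 - 2*R*‖x‖*⟪(ω : Eu (m+2)), e⟫) := by
      rw [← Real.sqrt_sq (norm_nonneg _), norm_sub_sq_real, hn]
      congr 1
      have : ⟪((sphereScale (m+2) R hR ω : Metric.sphere (0 : Eu (m+2)) R) : Eu (m+2)), x⟫ =
        R * ‖x‖ * ⟪(ω : Eu (m+2)), e⟫ := by
        conv_lhs => rw [hxe]
        simp only [sphereScale]
        rw [real_inner_smul_left, real_inner_smul_right]; ring
      rw [this]; ring
    have hne : ((sphereScale (m+2) R hR ω : Metric.sphere (0 : Eu (m+2)) R) : Eu (m+2)) ≠ x := by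
      intro h
      rw [h] at hn
      linarith
    rw [norm_Gk m R x _ hn hne hx.le, fprof, ← hd]
    congr 5
    rw [hd, Real.sq_sqrt]
    by_contra hlt
    have : √ (R^2 + ‖x‖^2 - 2*R*‖x‖*⟪(ω : Eu (m+2)), e⟫) = 0 := Real.sqrt_eq_zero_of_nonpos (by linarith)
    rw [← hd] at this
    exact hne (sub_eq_zero.1 (norm_eq_zero.1 this))
  simp only [key]
  rw [sphere_int m e he _ hfm hf0, profile_int m R ‖x‖ (norm_nonneg x) hx, TcoefR]
  have hA : 0 < sphereArea (m+2) := by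
    have := (Real.Gamma_pos_of_pos (show (0:ℝ) < ((m+2 : ℕ) : ℝ) / 2 by positivity))
    unfold sphereArea
    positivity
  rw [ENNReal.toReal_ofReal (by positivity)]
  simp only [show m + 2 - 1 = m + 1 from rfl, show m + 2 - 2 = m from rfl, smul_eq_mul]
  have : R - ‖x‖ ≠ 0 := by linarith
  have : R + ‖x‖ ≠ 0 := by positivity
  field_simp

/-- For `n ≥ 2`, `R > 0` and `x` in the open ball `𝔹_R ⊂ ℝⁿ`, the
smallest constant `c` such that `|div u(x)| ≤ c ‖g‖_{[L^∞(∂𝔹_R)]^n}` for every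
Poisson integral `u` of `g ∈ [L^∞(∂𝔹_R)]^n` (equivalently, such that
`|div u(x)| ≤ c` whenever `‖g‖_∞ ≤ 1`) equals `𝒯_{n,R}(x)`. -/
theorem sharp_divergence_coefficient_ball_radius
    (n : ℕ) (hn : 2 ≤ n) (R : ℝ) (hR : 0 < R)
    (x : Eu n) (hx : x ∈ Metric.ball (0 : Eu n) R) :
    IsLeast {c : ℝ |
        ∀ g : Metric.sphere (0 : Eu n) R → Eu n, Measurable g →
          (∀ᵐ y ∂(sphereMeasureR n R hR), ‖g y‖ ≤ 1) →
          |divg (poissonBallRV R hR g) x| ≤ c}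
      (TcoefR n R ‖x‖) := by
  obtain ⟨m, rfl⟩ : ∃ m, n = m + 2 := ⟨n - 2, by omega⟩
  have hx' : ‖x‖ < R := by simpa using hx
  have hA : 0 < sphereArea (m+2) := by
    have := (Real.Gamma_pos_of_pos (show (0:ℝ) < ((m+2 : ℕ) : ℝ) / 2 by positivity))
    unfold sphereArea
    positivity
  rw [← int_Gk m R hR x hx']
  have hI : Integrable (fun y : Metric.sphere (0 : Eu (m+2)) R => ‖Gk m R x y‖)
      (sphereMeasureR (m+2) R hR) := by
    refine Integrable.of_bound (Gk_meas m R x).norm.aestronglyMeasurable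
      (2 / (R - ‖x‖)^(m+2) * R + ((m:ℝ)+2) * R^2 / (R - ‖x‖)^(m+4) * (2 * R)) (ae_of_all _ fun y => ?_)
    rw [norm_norm]
    exact Gk_bound m R x y (R - ‖x‖) (by linarith) (by simpa using y.2) (by linarith)
  constructor
  · intro g hg hg1
    rw [divg_eq m R hR x hx' g hg hg1, abs_mul, abs_of_pos (by positivity)]
    gcongr
    rw [← Real.norm_eq_abs]
    refine MeasureTheory.norm_integral_le_of_norm_le hI ?_
    filter_upwards [hg1] with y hy
    calc _ ≤ ‖Gk m R x y‖ * ‖g y‖ := norm_inner_le_norm _ _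
      _ ≤ ‖Gk m R x y‖ * 1 := by gcongr
      _ = _ := mul_one _
  · intro c hc
    have hgm : Measurable (fun y : Metric.sphere (0 : Eu (m+2)) R =>
        ‖Gk m R x y‖⁻¹ • Gk m R x y) := (Gk_meas m R x).norm.inv.smul (Gk_meas m R x)
    have hg1 : ∀ y : Metric.sphere (0 : Eu (m+2)) R, ‖‖Gk m R x y‖⁻¹ • Gk m R x y‖ ≤ 1 := by
      intro y
      rw [norm_smul, norm_inv, norm_norm]
      exact inv_mul_le_one
    have h := hc _ hgm (ae_of_all _ hg1)
    rw [divg_eq m R hR x hx' _ hgm (ae_of_all _ hg1)] at h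
    refine le_trans (le_of_eq ?_) ((le_abs_self _).trans h)
    congr 2
    ext y
    rw [real_inner_smul_right, real_inner_self_eq_norm_sq]
    by_cases h0 : ‖Gk m R x y‖ = 0
    · simp [h0]
    · field_simp
end
end
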